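/- arXiv:math/0302213 — 8 statements merged into one kernel-verified Lean document; each statement's English description precedes it below -/
import Mathlib

section
/- Let n ≥ 2 be an integer. In the polynomial ring ℤ[x_1,…,x_n], the sum over all spanning trees T of the complete graph K_n of the monomial ∏_{i=1}^n x_i^{deg_T(i)} equals x_1 x_2 ⋯ x_n · (x_1 + x_2 + ⋯ + x_n)^{n−2}. -/
/-!
Dividing the identity by `∏ x_i`, the claim is `∑_T ∏ x_i^(deg_T i - 1) = (∑ x_i)^(n-2)`.
It is proved for an arbitrary finite vertex type `V` by induction on `n = |V|`.

Both sides are homogeneous of degree `n - 2 < n`, so each of their monomials misses some variable;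
hence two such polynomials agree as soon as they agree after setting any single variable `x_v` to
zero (`eq_of_forall_aeval_update_zero`). Setting `x_v = 0` kills the trees in which `v` is not a
leaf. A tree with leaf `v` is the same as a tree on the other vertices together with the neighbour
`u` of `v`; attaching `v` at `u` multiplies the weight by `x_u`. So the left side becomes
`(∑_{u ≠ v} x_u)` times the enumerator on `V \ {v}` (`treeSum_eq_of_weight_eq_zero`), and the
induction hypothesis applies. To make it applicable with one variable specialised to zero, the
statement that is proved by induction (`treeSum_eq`) allows weights in any commutative ring.
-/


open MvPolynomial

/-- The set of spanning trees of a simple graph `G`: spanning subgraphs of `G`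
(encoded as simple graphs on the same vertex set below `G`) that are trees. -/
def spanningTrees {V : Type*} (G : SimpleGraph V) : Set (SimpleGraph V) :=
  {T | T ≤ G ∧ T.IsTree}

open scoped Classical in
/-- The tree enumerator of the complete graph on `V` at the vertex weights `w`, with all exponents
lowered by one. -/
noncomputable def treeSum (V : Type) [Fintype V] {R : Type} [CommRing R] (w : V → R) : R :=
  ∑ T : SimpleGraph V with T.IsTree, ∏ i, w i ^ (T.degree i - 1)

/-- The graph obtained from a graph on the vertices other than `v` by attaching `v` as a leaf
at `u`. -/
def attachLeaf {V : Type} {v : V} (u : ({v}ᶜ : Set V)) (T : SimpleGraph ({v}ᶜ : Set V)) :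
    SimpleGraph V where
  Adj a b := (∃ (ha : a ∈ ({v}ᶜ : Set V)) (hb : b ∈ ({v}ᶜ : Set V)), T.Adj ⟨a, ha⟩ ⟨b, hb⟩) ∨
    (a = v ∧ b = u) ∨ (a = u ∧ b = v)
  symm := ⟨by
    rintro a b (⟨ha, hb, h⟩ | h | h)
    · exact Or.inl ⟨hb, ha, h.symm⟩
    · exact Or.inr (Or.inr h.symm)
    · exact Or.inr (Or.inl h.symm)⟩
  loopless := ⟨by
    rintro a (⟨ha, hb, h⟩ | h | h)
    · exact h.ne rfl
    · exact u.2 (h.2.symm.trans h.1)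
    · exact u.2 (h.1.symm.trans h.2)⟩

section Polynomials

variable {V : Type} [DecidableEq V]

/-- Setting `x_v` to zero does not change the coefficients of monomials not involving `x_v`. -/
lemma coeff_aeval_update_zero (v : V) (d : V →₀ ℕ) (hd : d v = 0) (p : MvPolynomial V ℤ) :
    coeff d (aeval (Function.update X v 0 : V → MvPolynomial V ℤ) p) = coeff d p := by
  induction p using MvPolynomial.induction_on' with
  | add p q hp hq => rw [map_add, coeff_add, coeff_add, hp, hq]
  | monomial e c =>
    by_cases he : e v = 0
    · suffices aeval (Function.update X v 0 : V → MvPolynomial V ℤ) (monomial e c)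
          = monomial e c by rw [this]
      rw [aeval_monomial, monomial_eq]
      congr 1
      refine Finsupp.prod_congr fun i hi => ?_
      have : i ≠ v := by rintro rfl; simp_all
      simp [this]
    · rw [aeval_monomial, Finsupp.prod,
        Finset.prod_eq_zero (i := v) (by simpa using he) (by simp [he])]
      have : e ≠ d := by rintro rfl; exact he hd
      simp [coeff_monomial, this]

/-- A homogeneous polynomial of degree less than the number of variables is determined by its
specialisations at `x_v = 0`, because each of its monomials misses some variable. -/
lemma eq_of_forall_aeval_update_zero [Fintype V] {k : ℕ} (hk : k < Fintype.card V) {p q : MvPolynomial V ℤ}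
    (hp : p.IsHomogeneous k) (hq : q.IsHomogeneous k)
    (h : ∀ v, aeval (Function.update X v 0 : V → MvPolynomial V ℤ) p =
      aeval (Function.update X v 0 : V → MvPolynomial V ℤ) q) : p = q := by
  ext d
  by_cases hd : d.degree = k
  · obtain ⟨v, hv⟩ : ∃ v, d v = 0 := by
      by_contra! hc
      have : ∑ v : V, 1 ≤ ∑ v, d v :=
        Finset.sum_le_sum fun v _ => Nat.one_le_iff_ne_zero.2 (hc v)
      rw [← Finsupp.degree_eq_sum] at this
      simp at this
      omega
    rw [← coeff_aeval_update_zero v d hv p, h v, coeff_aeval_update_zero v d hv q]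
  · rw [hp.coeff_eq_zero hd, hq.coeff_eq_zero hd]

end Polynomials

open scoped Classical in
lemma prod_eq_mul_prod_compl {V R : Type} [Fintype V] [CommMonoid R] (v : V) (f : V → R) :
    ∏ i, f i = f v * ∏ i : ({v}ᶜ : Set V), f i := by
  rw [Fintype.prod_eq_mul_prod_compl v]
  congr 1
  exact Finset.prod_subtype _ (by simp) f

open scoped Classical in
lemma sum_eq_add_sum_compl {V R : Type} [Fintype V] [AddCommMonoid R] (v : V) (f : V → R) :
    ∑ i, f i = f v + ∑ i : ({v}ᶜ : Set V), f i := by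
  rw [Fintype.sum_eq_add_sum_compl v]
  congr 1
  exact Finset.sum_subtype _ (by simp) f

section AttachLeaf

open scoped Classical

variable {V : Type} {v : V} (u : ({v}ᶜ : Set V)) (T : SimpleGraph ({v}ᶜ : Set V))

lemma attachLeaf_adj_left (x : V) : (attachLeaf u T).Adj v x ↔ x = u := by
  have := u.2
  simp only [attachLeaf, Set.mem_compl_iff, Set.mem_singleton_iff] at *
  grind

lemma attachLeaf_adj_coe (x y : ({v}ᶜ : Set V)) : (attachLeaf u T).Adj x y ↔ T.Adj x y := by
  have hx := x.2
  have hy := y.2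
  simp only [attachLeaf, Set.mem_compl_iff, Set.mem_singleton_iff] at *
  grind

lemma degree_attachLeaf_self [Fintype V] : (attachLeaf u T).degree v = 1 := by
  rw [SimpleGraph.degree_eq_one_iff_existsUnique_adj]
  exact ⟨u, (attachLeaf_adj_left u T _).2 rfl, fun y hy => (attachLeaf_adj_left u T _).1 hy⟩

lemma degree_attachLeaf_coe [Fintype V] (x : ({v}ᶜ : Set V)) :
    (attachLeaf u T).degree x = T.degree x + if x = u then 1 else 0 := by
  have h1 : (attachLeaf u T).degree x = ∑ y, if (attachLeaf u T).Adj x y then 1 else 0 := by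
    rw [← SimpleGraph.card_neighborFinset_eq_degree, SimpleGraph.neighborFinset_eq_filter,
      Finset.card_filter]
  have h2 : T.degree x = ∑ y, if T.Adj x y then 1 else 0 := by
    rw [← SimpleGraph.card_neighborFinset_eq_degree, SimpleGraph.neighborFinset_eq_filter,
      Finset.card_filter]
  rw [h1, h2, sum_eq_add_sum_compl v, add_comm]
  simp only [attachLeaf_adj_coe]
  simp only [SimpleGraph.adj_comm _ _ v, attachLeaf_adj_left, Subtype.ext_iff]

lemma connected_attachLeaf (hT : T.Connected) : (attachLeaf u T).Connected := by
  have key : ∀ x, (attachLeaf u T).Reachable x u := by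
    intro x
    by_cases hx : x = v
    · subst hx
      exact ((attachLeaf_adj_left u T _).2 rfl).reachable
    · let f : T →g attachLeaf u T := ⟨Subtype.val, fun h => (attachLeaf_adj_coe u T _ _).2 h⟩
      exact (hT.preconnected ⟨x, hx⟩ u).map f
  exact { preconnected := fun x y => (key x).trans (key y).symm, nonempty := ⟨v⟩ }

/-- Acyclicity comes for free from connectedness and the edge count, which the degree formulas
give through the handshake lemma. -/
lemma isTree_attachLeaf [Fintype V] (hT : T.IsTree) : (attachLeaf u T).IsTree := by
  rw [SimpleGraph.isTree_iff_connected_and_card]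
  refine ⟨connected_attachLeaf u T hT.connected, ?_⟩
  have h1 := (attachLeaf u T).sum_degrees_eq_twice_card_edges
  have h2 := T.sum_degrees_eq_twice_card_edges
  have h3 := hT.card_edgeFinset
  rw [sum_eq_add_sum_compl v, degree_attachLeaf_self] at h1
  simp only [degree_attachLeaf_coe, Finset.sum_add_distrib, Finset.sum_ite_eq', Finset.mem_univ,
    if_true, h2] at h1
  have h4 := sum_eq_add_sum_compl v (fun _ => 1)
  simp only [Finset.sum_const, Finset.card_univ, smul_eq_mul, mul_one] at h4
  rw [Nat.card_eq_fintype_card, Nat.card_eq_fintype_card, ← SimpleGraph.edgeFinset_card]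
  omega

end AttachLeaf

open scoped Classical in
/-- Leaf removal: a weight `w v = 0` leaves only the trees in which `v` is a leaf. -/
lemma treeSum_eq_of_weight_eq_zero {V : Type} [Fintype V] {R : Type} [CommRing R] (w : V → R)
    (hV : 3 ≤ Fintype.card V) (v : V) (hw : w v = 0) :
    treeSum V w = (∑ i, w i) * treeSum ({v}ᶜ : Set V) (fun i => w i) := by
  have hcard : 1 < Fintype.card ({v}ᶜ : Set V) := by
    rw [Fintype.card_compl_set]; simp; omega
  have : Nontrivial ({v}ᶜ : Set V) := Fintype.one_lt_card_iff_nontrivial.1 hcard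
  have : Nontrivial V := Fintype.one_lt_card_iff_nontrivial.1 (by omega)
  have hleaf : treeSum V w =
      ∑ T : SimpleGraph V with T.IsTree ∧ T.degree v = 1, ∏ i, w i ^ (T.degree i - 1) := by
    rw [treeSum]
    symm
    refine Finset.sum_subset (fun T hT => ?_) (fun T hT hT' => ?_)
    · simp at hT ⊢; exact hT.1
    · simp at hT hT'
      have h0 := hT.connected.preconnected.degree_pos_of_nontrivial v
      have h1 := hT' hT
      refine Finset.prod_eq_zero (Finset.mem_univ v) ?_
      rw [hw, zero_pow (by omega)]
  rw [hleaf, sum_eq_add_sum_compl v, hw, zero_add, treeSum, Finset.sum_mul_sum,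
    ← Finset.sum_product']
  symm
  refine Finset.sum_bij (fun p _ => attachLeaf p.1 p.2) ?_ ?_ ?_ ?_
  · rintro ⟨u, T⟩ h
    simp at h ⊢
    exact ⟨isTree_attachLeaf u T h, degree_attachLeaf_self u T⟩
  · rintro ⟨u, T⟩ - ⟨u', T'⟩ - h
    dsimp only at h
    have hu : u = u' := by
      apply Subtype.ext
      rw [← attachLeaf_adj_left u' T', ← h, attachLeaf_adj_left]
    have hT : T = T' := by
      ext x y
      rw [← attachLeaf_adj_coe u T, h, attachLeaf_adj_coe]
    rw [hu, hT]
  · intro T h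
    simp only [Finset.mem_filter, Finset.mem_univ, true_and] at h
    obtain ⟨hT, hd⟩ := h
    obtain ⟨u, hu, huniq⟩ := SimpleGraph.degree_eq_one_iff_existsUnique_adj.1 hd
    refine ⟨(⟨u, hu.ne'⟩, T.induce {v}ᶜ), ?_, ?_⟩
    · simp only [Finset.mem_product, Finset.mem_filter, Finset.mem_univ, true_and]
      exact ⟨hT.connected.induce_compl_singleton_of_degree_eq_one hd, hT.isAcyclic.induce _⟩
    · have hv : ∀ y, (attachLeaf (v := v) ⟨u, hu.ne'⟩ (T.induce {v}ᶜ)).Adj v y ↔ T.Adj v y := by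
        intro y
        rw [attachLeaf_adj_left]
        exact ⟨fun h => h ▸ hu, huniq y⟩
      ext x y
      by_cases hx : x = v
      · subst hx; exact hv y
      by_cases hy : y = v
      · subst hy; rw [SimpleGraph.adj_comm, hv, SimpleGraph.adj_comm]
      exact attachLeaf_adj_coe (v := v) ⟨u, hu.ne'⟩ (T.induce {v}ᶜ) ⟨x, hx⟩ ⟨y, hy⟩
  · rintro ⟨u, T⟩ h
    simp only [Finset.mem_product, Finset.mem_filter, Finset.mem_univ, true_and] at h
    dsimp only
    rw [prod_eq_mul_prod_compl v, degree_attachLeaf_self, Nat.sub_self, pow_zero, one_mul]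
    have : ∀ x : ({v}ᶜ : Set V), w x ^ ((attachLeaf u T).degree x - 1) =
        (if x = u then w x else 1) * w x ^ (T.degree x - 1) := by
      intro x
      have := h.connected.preconnected.degree_pos_of_nontrivial x
      rw [degree_attachLeaf_coe]
      split_ifs with hx
      · rw [← pow_succ']
        congr 1
        omega
      · simp
    rw [Finset.prod_congr rfl fun x _ => this x, Finset.prod_mul_distrib]
    simp

open scoped Classical in
/-- The unique tree on two vertices is the single edge. -/
lemma treeSum_eq_one {V : Type} [Fintype V] {R : Type} [CommRing R] (w : V → R)
    (hV : Fintype.card V = 2) : treeSum V w = 1 := by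
  have : Nonempty V := Fintype.card_pos_iff.1 (by omega)
  have htop : (⊤ : SimpleGraph V).IsTree :=
    ⟨SimpleGraph.connected_top, SimpleGraph.IsAcyclic.of_card_le_two (by simp [hV])⟩
  have h : (Finset.univ.filter fun T : SimpleGraph V => T.IsTree) = {⊤} := by
    ext T
    simp only [Finset.mem_filter, Finset.mem_univ, true_and, Finset.mem_singleton]
    refine ⟨fun hT => ?_, fun hT => hT ▸ htop⟩
    exact top_le_iff.1
      ((SimpleGraph.isTree_iff_minimal_connected.1 htop).2 hT.connected le_top)
  rw [treeSum, h, Finset.sum_singleton]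
  refine Finset.prod_eq_one fun i _ => ?_
  -- `convert` bridges the two decidability instances for adjacency in `⊤`.
  have hd : w i ^ ((⊤ : SimpleGraph V).degree i - 1) = 1 := by
    rw [SimpleGraph.complete_graph_degree, hV, Nat.sub_self, pow_zero]
  convert hd

lemma map_treeSum {V : Type} [Fintype V] {R S : Type} [CommRing R] [CommRing S] (f : R →+* S)
    (w : V → R) : f (treeSum V w) = treeSum V (fun i => f (w i)) := by
  simp only [treeSum, map_sum, map_prod, map_pow]

open scoped Classical in
lemma isHomogeneous_treeSum {V : Type} [Fintype V] (hV : 2 ≤ Fintype.card V) :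
    (treeSum V (X : V → MvPolynomial V ℤ)).IsHomogeneous (Fintype.card V - 2) := by
  have : Nontrivial V := Fintype.one_lt_card_iff_nontrivial.1 (by omega)
  refine IsHomogeneous.sum _ _ _ fun T hT => ?_
  simp only [Finset.mem_filter, Finset.mem_univ, true_and] at hT
  have h1 := T.sum_degrees_eq_twice_card_edges
  have h2 := hT.card_edgeFinset
  have h3 : ∑ v, T.degree v = ∑ v, (T.degree v - 1) + Fintype.card V := by
    rw [← Finset.card_univ, Finset.card_eq_sum_ones, ← Finset.sum_add_distrib]
    refine Finset.sum_congr rfl fun v _ => ?_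
    have := hT.connected.preconnected.degree_pos_of_nontrivial v
    omega
  have h4 : Fintype.card V - 2 = ∑ v, (T.degree v - 1) := by omega
  rw [h4]
  exact IsHomogeneous.prod _ _ _ fun i _ => isHomogeneous_X_pow _ _

open scoped Classical in
/-- The enumerator identity for arbitrary weights; the inductive step proves it for indeterminate
weights over `ℤ` and then specialises. -/
theorem treeSum_eq (k : ℕ) : ∀ (V : Type) [Fintype V], Fintype.card V = k + 2 →
    ∀ (R : Type) [CommRing R] (w : V → R), treeSum V w = (∑ i, w i) ^ k := by
  induction k with
  | zero =>
    intro V _ hV R _ w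
    rw [treeSum_eq_one w hV, pow_zero]
  | succ k ih =>
    intro V _ hV R _ w
    have huniv : treeSum V (X : V → MvPolynomial V ℤ) = (∑ i, X i) ^ (k + 1) := by
      refine eq_of_forall_aeval_update_zero (k := k + 1) (by omega) ?_ ?_ fun v => ?_
      · have := isHomogeneous_treeSum (V := V) (by omega)
        rwa [hV] at this
      · have : (∑ i, X i : MvPolynomial V ℤ).IsHomogeneous 1 :=
          IsHomogeneous.sum _ _ _ fun i _ => isHomogeneous_X _ _
        simpa using this.pow (k + 1)
      · set w' : V → MvPolynomial V ℤ := Function.update X v 0 with hw'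
        have hv : w' v = 0 := by simp [hw']
        have hcard : Fintype.card ({v}ᶜ : Set V) = k + 2 := by
          rw [Fintype.card_compl_set]; simp; omega
        have h1 : aeval w' (treeSum V (X : V → MvPolynomial V ℤ)) = treeSum V w' := by
          have := map_treeSum (aeval w' : MvPolynomial V ℤ →ₐ[ℤ] _).toRingHom X
          simpa only [AlgHom.toRingHom_eq_coe, RingHom.coe_coe, aeval_X] using this
        rw [h1, treeSum_eq_of_weight_eq_zero w' (by omega) v hv, ih _ hcard, map_pow, map_sum]
        simp only [aeval_X]
        rw [sum_eq_add_sum_compl v, hv, zero_add, pow_succ']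
    have h1 := map_treeSum (aeval w : MvPolynomial V ℤ →ₐ[ℤ] R).toRingHom X
    simp only [AlgHom.toRingHom_eq_coe, RingHom.coe_coe, aeval_X] at h1
    rw [← h1, huniv, map_pow, map_sum]
    simp only [aeval_X]

open scoped Classical in
lemma finsum_mem_spanningTrees_top {V : Type} [Fintype V] (hV : 2 ≤ Fintype.card V) :
    (∑ᶠ T ∈ spanningTrees (⊤ : SimpleGraph V),
        ∏ i : V, (X i : MvPolynomial V ℤ) ^ Nat.card (T.neighborSet i))
      = (∏ i : V, (X i : MvPolynomial V ℤ)) *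
          (∑ i : V, (X i : MvPolynomial V ℤ)) ^ (Fintype.card V - 2) := by
  have : Nontrivial V := Fintype.one_lt_card_iff_nontrivial.1 (by omega)
  have hset : spanningTrees (⊤ : SimpleGraph V) =
      ↑(Finset.univ.filter fun T : SimpleGraph V => T.IsTree) := by
    ext T
    simp [spanningTrees]
  rw [← treeSum_eq (Fintype.card V - 2) V (by omega), hset, finsum_mem_coe_finset, treeSum,
    Finset.mul_sum]
  refine Finset.sum_congr rfl fun T hT => ?_
  simp only [Finset.mem_filter, Finset.mem_univ, true_and] at hT
  rw [← Finset.prod_mul_distrib]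
  refine Finset.prod_congr rfl fun i _ => ?_
  have := hT.connected.preconnected.degree_pos_of_nontrivial i
  rw [← pow_succ', Nat.card_eq_fintype_card, SimpleGraph.card_neighborSet_eq_degree]
  congr 1
  omega

/-- **Cayley–Prüfer theorem**: the spanning tree enumerator of the complete graph `K_n`
by degree sequence equals `x_1 ⋯ x_n (x_1 + ⋯ + x_n)^(n-2)`. -/
theorem cayley_prufer (n : ℕ) (hn : 2 ≤ n) :
    (∑ᶠ T ∈ spanningTrees (⊤ : SimpleGraph (Fin n)),
        ∏ i : Fin n, (X i : MvPolynomial (Fin n) ℤ) ^ Nat.card (T.neighborSet i))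
      = (∏ i : Fin n, (X i : MvPolynomial (Fin n) ℤ)) *
          (∑ i : Fin n, (X i : MvPolynomial (Fin n) ℤ)) ^ (n - 2) := by
  simpa using finsum_mem_spanningTrees_top (V := Fin n) (by simpa using hn)
end

section
/- Let n ≥ 2 and let G be a connected threshold graph on vertex set {1,…,n} with degree sequence λ = (λ_1 ≥ ⋯ ≥ λ_n) and conjugate partition λ'. Then in ℤ[x_1,…,x_n, y_1,…,y_n], Σ_{T ∈ Tree(G)} ∏_{i=1}^n x_i^{indeg_T(i)} y_i^{outdeg_T(i)} = x_1 y_n · ∏_{r=2}^{n−1} ( Σ_{i=1}^{λ'_r} x_{min{i,r}} y_{max{i,r}} ). -/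
/-!
The weight of a spanning tree is the product of `x_i y_j` over its edges `{i, j}` with `i < j`, so
by the matrix-tree theorem the enumerator is the determinant of a reduced weighted Laplacian
(`finsum_spanningTrees_eq_det`). The matrix-tree theorem is obtained by expanding the determinant
multilinearly along the rows into a sum over parent functions `f` (`det_redLap_eq_sum`): the
determinant attached to `f` is `1` if every vertex reaches the root under `f`, and `0` otherwise.
The functions of the first kind correspond bijectively to trees rooted at the smallest vertex.

The determinant is evaluated by induction on the number of vertices (`det_threshold`). The last
vertex `n` of a threshold graph is adjacent to an initial segment `1, …, k`, each member of which is
adjacent to every other vertex. Put `S = x_1 + ⋯ + x_k`. A Schur complement (`det_redLap_succ`)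
eliminates the vertex `n`, extracts the factor `S y_n`, and adds `x_i x_j y_n / S` to the weight of
every edge `{i, j}` with `i, j ≤ k`. The result is the graph without `n`, which is again threshold,
with the same `x` and with `y_j` replaced by `y_j + x_j y_n / S` for `j ≤ k`. This substitution
turns each factor of the product formula for `n - 1` vertices into the corresponding factor
for `n` vertices, and `S` times the new `y_{n-1}` is the remaining factor, with `r = n - 1`.
The division by `S` takes place in the fraction field of the polynomial ring.
-/

open MvPolynomial Finset

/-- The indegree of vertex `i` in `T`: the number of neighbors of `i` in `T`
with larger label (edges being oriented from larger to smaller label). -/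
noncomputable def indeg {n : ℕ} (T : SimpleGraph (Fin n)) (i : Fin n) : ℕ :=
  Nat.card {j : Fin n | T.Adj i j ∧ i < j}

/-- The outdegree of vertex `i` in `T`: the number of neighbors of `i` in `T`
with smaller label (edges being oriented from larger to smaller label). -/
noncomputable def outdeg {n : ℕ} (T : SimpleGraph (Fin n)) (i : Fin n) : ℕ :=
  Nat.card {j : Fin n | T.Adj i j ∧ j < i}

/-! ### Reduced Laplacians and elimination of a vertex -/

/-- The Laplacian of the weighted graph on the vertices `0, …, m` with edge weights `w`, with the
row and column of the vertex `0` deleted; the index `i : Fin m` stands for the vertex `i + 1`.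
The values `w a a` cancel, so they need not be zero. -/
def redLap {R : Type*} [CommRing R] (w : ℕ → ℕ → R) (m : ℕ) : Matrix (Fin m) (Fin m) R :=
  Matrix.of fun i j =>
    (if i = j then ∑ u ∈ range (m + 1), w (i + 1) u else 0) - w (i + 1) (j + 1)

lemma redLap_congr {R : Type*} [CommRing R] {w w' : ℕ → ℕ → R} {m : ℕ}
    (h : ∀ a b, a ≤ m → b ≤ m → a ≠ b → w a b = w' a b) : redLap w m = redLap w' m := by
  ext i j
  have hi := i.2
  have hj := j.2
  by_cases hij : i = j
  · subst hij
    simp only [redLap, Matrix.of_apply, if_true]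
    rw [← sum_erase_eq_sub (f := w (i + 1)) (a := (i : ℕ) + 1) (by simp),
      ← sum_erase_eq_sub (f := w' (i + 1)) (a := (i : ℕ) + 1) (by simp)]
    refine sum_congr rfl fun u hu => ?_
    simp only [mem_erase, mem_range] at hu
    exact h _ _ (by omega) (by omega) (by omega)
  · have : (i : ℕ) ≠ j := fun h => hij (Fin.ext h)
    simp [redLap, hij, h (i + 1) (j + 1) (by omega) (by omega) (by omega)]

/-- Star-mesh transformation: a Schur complement removes the last vertex `m + 1`, of total
weight `W`, at the price of adding `w a (m + 1) * w (m + 1) b / W` to the weight of each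
remaining pair `a, b`. -/
lemma det_redLap_succ {K : Type*} [Field K] (w : ℕ → ℕ → K) (m : ℕ) {W : K}
    (hW : W = ∑ u ∈ range (m + 1), w (m + 1) u) (hW0 : W ≠ 0) :
    (redLap w (m + 1)).det =
      W * (redLap (fun a b => w a b + w a (m + 1) * w (m + 1) b / W) m).det := by
  let A : Matrix (Fin m) (Fin m) K := Matrix.of fun i j =>
    (if i = j then ∑ u ∈ range (m + 2), w (i + 1) u else 0) - w (i + 1) (j + 1)
  let B : Matrix (Fin m) (Fin 1) K := Matrix.of fun i _ => - w (i + 1) (m + 1)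
  let C : Matrix (Fin 1) (Fin m) K := Matrix.of fun _ j => - w (m + 1) (j + 1)
  let D : Matrix (Fin 1) (Fin 1) K := Matrix.diagonal fun _ => W
  have hM : (redLap w (m + 1)).submatrix finSumFinEquiv finSumFinEquiv
      = Matrix.fromBlocks A B C D := by
    ext i j
    rcases i with i | i <;> rcases j with j | j
    · simp [redLap, A]
    · have := i.2
      have hne : Fin.castAdd 1 i ≠ Fin.natAdd m j := by
        intro h; have := congrArg Fin.val h; simp at this; omega
      simp [redLap, B, hne]
    · have := j.2
      have hne : Fin.natAdd m i ≠ Fin.castAdd 1 j := by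
        intro h; have := congrArg Fin.val h; simp at this; omega
      simp [redLap, C, hne]
    · have : i = j := Subsingleton.elim _ _
      subst this
      simp [redLap, D, hW, sum_range_succ _ (m + 1)]
  have hDD : D * Matrix.diagonal (fun _ => W⁻¹) = 1 := by
    simp [D, hW0]
  let _ : Invertible D := ⟨Matrix.diagonal (fun _ => W⁻¹), by simp [D, hW0], hDD⟩
  have hinv : ⅟D = Matrix.diagonal (fun _ => W⁻¹) := invOf_eq_right_inv hDD
  rw [← Matrix.det_submatrix_equiv_self (finSumFinEquiv (m := m) (n := 1)), hM,
    Matrix.det_fromBlocks₂₂, hinv]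
  congr 1
  · simp [D]
  · congr 1
    ext i j
    have hs : ∑ u ∈ range (m + 1), w (i + 1) (m + 1) * w (m + 1) u / W = w (i + 1) (m + 1) := by
      rw [← sum_div, ← mul_sum, ← hW]; field_simp
    simp only [A, B, C, redLap, Matrix.sub_apply, Matrix.mul_apply, Matrix.of_apply,
      Matrix.diagonal_apply_eq, sum_add_distrib, hs, sum_range_succ _ (m + 1), Fin.sum_univ_one]
    ring

/-! ### The matrix-tree theorem for parent functions -/

/-- The parent function `f`, given on the non-root vertices `1, …, m`, extended to all vertices by
fixing the root `0`. -/
def step {m : ℕ} (f : Fin m → Fin (m + 1)) : Fin (m + 1) → Fin (m + 1) := Fin.cons 0 f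

@[simp] lemma step_zero {m : ℕ} (f : Fin m → Fin (m + 1)) : step f 0 = 0 := rfl
@[simp] lemma step_succ {m : ℕ} (f : Fin m → Fin (m + 1)) (i : Fin m) : step f i.succ = f i := rfl

/-- A parent function is rooted if following parents leads from every vertex to the root. -/
def Rooted {m : ℕ} (f : Fin m → Fin (m + 1)) : Prop := ∀ v, ∃ k, (step f)^[k] v = 0

lemma step_iterate_zero {m : ℕ} (f : Fin m → Fin (m + 1)) (k : ℕ) : (step f)^[k] 0 = 0 :=
  Function.iterate_fixed (step_zero f) k

/-- The adjacency matrix of the functional digraph of `f`, restricted to the non-root vertices. -/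
def parentMatrix (R : Type*) [CommRing R] {m : ℕ} (f : Fin m → Fin (m + 1)) :
    Matrix (Fin m) (Fin m) R :=
  Matrix.of fun i j => if f i = j.succ then 1 else 0

lemma parentMatrix_pow {R : Type*} [CommRing R] {m : ℕ} (f : Fin m → Fin (m + 1)) (k : ℕ)
    (i j : Fin m) :
    (parentMatrix R f ^ k) i j = if (step f)^[k] i.succ = j.succ then 1 else 0 := by
  induction k generalizing i with
  | zero => simp [Matrix.one_apply]
  | succ k ih =>
    rw [pow_succ', Matrix.mul_apply]
    simp only [ih, Function.iterate_succ_apply, step_succ]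
    rcases Fin.eq_zero_or_eq_succ (f i) with h | ⟨l, h⟩
    · simp [parentMatrix, h, step_iterate_zero, (Fin.succ_ne_zero _).symm]
    · rw [sum_eq_single l]
      · simp [parentMatrix, h]
      · intro b _ hb
        simp [parentMatrix, h, hb.symm]
      · simp

/-- The parent matrix of a rooted function is nilpotent, so its characteristic polynomial is a power
of the variable. -/
lemma det_one_sub_parentMatrix_of_rooted {R : Type*} [CommRing R] [IsDomain R] {m : ℕ}
    {f : Fin m → Fin (m + 1)} (hf : Rooted f) : (1 - parentMatrix R f).det = 1 := by
  have hnil : IsNilpotent (parentMatrix R f) := by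
    choose d hd using hf
    refine ⟨∑ v, d v, ?_⟩
    ext i j
    rw [parentMatrix_pow, ← sum_erase_add _ _ (mem_univ i.succ),
      Function.iterate_add_apply, hd, step_iterate_zero]
    simp [(Fin.succ_ne_zero _).symm]
  have h := (Matrix.isNilpotent_charpoly_sub_pow_of_isNilpotent hnil).eq_zero
  rw [sub_eq_zero] at h
  have h1 := congrArg (Polynomial.eval 1) h
  rw [Matrix.eval_charpoly] at h1
  simpa using h1

/-- The indicator of the vertices that never reach the root is a nonzero kernel vector. -/
lemma det_one_sub_parentMatrix_of_not_rooted {R : Type*} [CommRing R] [IsDomain R] {m : ℕ}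
    {f : Fin m → Fin (m + 1)} (hf : ¬ Rooted f) : (1 - parentMatrix R f).det = 0 := by
  classical
  rw [← Matrix.exists_mulVec_eq_zero_iff]
  let v : Fin (m + 1) → R := fun a => if ∃ k, (step f)^[k] a = 0 then 0 else 1
  have hv0 : v 0 = 0 := if_pos ⟨0, rfl⟩
  have hstep : ∀ a, v (step f a) = v a := by
    intro a
    have : (∃ k, (step f)^[k] (step f a) = 0) ↔ ∃ k, (step f)^[k] a = 0 := by
      constructor
      · rintro ⟨k, hk⟩; exact ⟨k + 1, hk⟩
      · rintro ⟨k, hk⟩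
        refine ⟨k, ?_⟩
        rw [← Function.iterate_succ_apply, Function.iterate_succ_apply', hk, step_zero]
    simp only [v, this]
  refine ⟨fun i => v i.succ, ?_, ?_⟩
  · unfold Rooted at hf
    push Not at hf
    obtain ⟨a, ha⟩ := hf
    have hva : v a = 1 := if_neg (by push Not; exact ha)
    rcases Fin.eq_zero_or_eq_succ a with h | ⟨i, rfl⟩
    · exact absurd h (ha 0)
    · intro h
      have := congrFun h i
      simp [hva] at this
  · ext i
    rw [Matrix.sub_mulVec, Matrix.one_mulVec, Pi.sub_apply, Pi.zero_apply, sub_eq_zero, ← hstep,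
      step_succ, Matrix.mulVec, dotProduct]
    rcases Fin.eq_zero_or_eq_succ (f i) with h | ⟨l, h⟩
    · simp [parentMatrix, h, hv0, (Fin.succ_ne_zero _).symm]
    · simp [parentMatrix, h]

open Classical in
/-- Matrix-tree theorem in terms of parent functions: row `i` of the reduced Laplacian is the sum
over all `u` of `w (i + 1) u` times the `i`-th row of `1 - parentMatrix R f` for any `f` with
`f i = u`, and the determinant is multilinear in the rows. -/
theorem det_redLap_eq_sum {R : Type*} [CommRing R] [IsDomain R] (w : ℕ → ℕ → R) (m : ℕ) :
    (redLap w m).det =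
      ∑ f : Fin m → Fin (m + 1) with Rooted f, ∏ i : Fin m, w (i + 1) (f i) := by
  let E : Fin m → Fin (m + 1) → Fin m → R := fun i u j =>
    (if i = j then 1 else 0) - if u = j.succ then 1 else 0
  have hrow : redLap w m = Matrix.of fun (i : Fin m) => ∑ u : Fin (m + 1), w (i + 1) u • E i u := by
    ext i j
    simp only [redLap, Matrix.of_apply, Finset.sum_apply, Pi.smul_apply, smul_eq_mul, mul_sub,
      sum_sub_distrib, ← sum_mul, sum_range, E]
    simp
  have hexp : (redLap w m).det = ∑ f : Fin m → Fin (m + 1),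
      (∏ i : Fin m, w (i + 1) (f i)) * (1 - parentMatrix R f).det := by
    rw [hrow]
    have h := MultilinearMap.map_sum
      (Matrix.detRowAlternating (R := R) (n := Fin m)).toMultilinearMap
      (fun (i : Fin m) (u : Fin (m + 1)) => w (i + 1) u • E i u)
    refine Eq.trans h (sum_congr rfl fun f _ => ?_)
    rw [MultilinearMap.map_smul_univ, smul_eq_mul]
    rfl
  rw [hexp, sum_filter]
  refine sum_congr rfl fun f _ => ?_
  split_ifs with hf
  · rw [det_one_sub_parentMatrix_of_rooted hf, mul_one]
  · rw [det_one_sub_parentMatrix_of_not_rooted hf, mul_zero]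

/-! ### Rooted parent functions and spanning trees -/

lemma Rooted.iterate_ne {m : ℕ} {f : Fin m → Fin (m + 1)} (hf : Rooted f) {v : Fin (m + 1)}
    (hv : v ≠ 0) {k : ℕ} (hk : 1 ≤ k) : (step f)^[k] v ≠ v := by
  intro h
  obtain ⟨d, hd⟩ := hf v
  have h1 : (step f)^[k * d] v = v := by
    rw [Function.iterate_mul]; exact Function.iterate_fixed h d
  have h2 : k * d = (k * d - d) + d := by
    have := Nat.le_mul_of_pos_left d hk
    omega
  rw [h2, Function.iterate_add_apply, hd, step_iterate_zero] at h1
  exact hv h1.symm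

/-- The simple graph whose edges join each non-root vertex to its parent. -/
def parentGraph {m : ℕ} (f : Fin m → Fin (m + 1)) : SimpleGraph (Fin (m + 1)) :=
  SimpleGraph.fromRel fun a b => ∃ i : Fin m, a = i.succ ∧ b = f i

lemma Rooted.parent_ne {m : ℕ} {f : Fin m → Fin (m + 1)} (hf : Rooted f) (i : Fin m) :
    f i ≠ i.succ :=
  hf.iterate_ne (Fin.succ_ne_zero i) le_rfl

lemma Rooted.adj_iff {m : ℕ} {f : Fin m → Fin (m + 1)} (hf : Rooted f) {a b : Fin (m + 1)} :
    (parentGraph f).Adj a b ↔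
      ∃ i : Fin m, (a = i.succ ∧ b = f i) ∨ (b = i.succ ∧ a = f i) := by
  rw [parentGraph, SimpleGraph.fromRel_adj, ← exists_or, and_iff_right_iff_imp]
  rintro ⟨i, ⟨rfl, rfl⟩ | ⟨rfl, rfl⟩⟩
  · exact (hf.parent_ne i).symm
  · exact hf.parent_ne i

lemma Rooted.connected {m : ℕ} {f : Fin m → Fin (m + 1)} (hf : Rooted f) :
    (parentGraph f).Connected := by
  have hreach : ∀ k v, (step f)^[k] v = 0 → (parentGraph f).Reachable v 0 := by
    intro k
    induction k with
    | zero => rintro v rfl; exact SimpleGraph.Reachable.refl _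
    | succ k ih =>
      intro v hv
      rcases Fin.eq_zero_or_eq_succ v with rfl | ⟨i, rfl⟩
      · exact SimpleGraph.Reachable.refl _
      · have hadj : (parentGraph f).Adj i.succ (f i) := hf.adj_iff.2 ⟨i, Or.inl ⟨rfl, rfl⟩⟩
        exact hadj.reachable.trans (ih _ hv)
  have h0 : ∀ v, (parentGraph f).Reachable v 0 := fun v => (hf v).elim fun k hk => hreach k v hk
  exact ⟨fun u v => (h0 u).trans (h0 v).symm⟩

/-- The graph is connected and has at most `m` edges on `m + 1` vertices. -/
lemma Rooted.isTree {m : ℕ} {f : Fin m → Fin (m + 1)} (hf : Rooted f) :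
    (parentGraph f).IsTree := by
  rw [SimpleGraph.isTree_iff_connected_and_card]
  refine ⟨hf.connected, le_antisymm ?_ hf.connected.card_vert_le_card_edgeSet_add_one⟩
  have hsub : (parentGraph f).edgeSet ⊆ Set.range fun i : Fin m => s(i.succ, f i) := by
    intro e
    induction e with
    | h a b =>
      rw [SimpleGraph.mem_edgeSet, hf.adj_iff]
      rintro ⟨i, ⟨rfl, rfl⟩ | ⟨rfl, rfl⟩⟩
      · exact ⟨i, rfl⟩
      · exact ⟨i, Sym2.eq_swap⟩
  have h1 := Nat.card_mono (Set.finite_range _) hsub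
  have h2 := Finite.card_range_le fun i : Fin m => s(i.succ, f i)
  simp only [Nat.card_eq_fintype_card, Fintype.card_fin] at h1 h2 ⊢
  omega

/-- If `f` and `g` differ at a vertex, then comparing edges shows that they also differ at its
`f`-parent, hence all along the path to the root, where they agree. -/
lemma Rooted.eq_of_parentGraph_eq {m : ℕ} {f g : Fin m → Fin (m + 1)} (hf : Rooted f)
    (hg : Rooted g) (h : parentGraph f = parentGraph g) : f = g := by
  have key : ∀ v, step f v ≠ step g v → step f (step f v) ≠ step g (step f v) := by
    intro v hv
    rcases Fin.eq_zero_or_eq_succ v with rfl | ⟨i, rfl⟩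
    · simp at hv
    have hadj : (parentGraph g).Adj i.succ (f i) := h ▸ hf.adj_iff.2 ⟨i, Or.inl ⟨rfl, rfl⟩⟩
    have hback : step g (f i) = i.succ := by
      obtain ⟨j, ⟨hj, hj'⟩ | ⟨hj, hj'⟩⟩ := hg.adj_iff.1 hadj
      · rw [Fin.succ_injective _ hj] at hv
        rw [Fin.succ_injective _ hj] at hj'
        exact absurd hj' hv
      · rw [hj, step_succ, hj']
    rw [step_succ, hback]
    exact hf.iterate_ne (Fin.succ_ne_zero i) (k := 2) (by omega)
  have hiter : ∀ k v, step f v ≠ step g v →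
      step f ((step f)^[k] v) ≠ step g ((step f)^[k] v) := by
    intro k
    induction k with
    | zero => exact fun v hv => hv
    | succ k ih => exact fun v hv => ih _ (key v hv)
  funext i
  by_contra hne
  obtain ⟨k, hk⟩ := hf i.succ
  have := hiter k i.succ hne
  rw [hk] at this
  exact this rfl

/-- As the parent of a vertex, take a neighbour that is closer to the root. -/
lemma exists_rooted_of_isTree {m : ℕ} {T : SimpleGraph (Fin (m + 1))} (hT : T.IsTree) :
    ∃ f : Fin m → Fin (m + 1), Rooted f ∧ parentGraph f = T := by
  have hpar : ∀ i : Fin m, ∃ u, T.Adj i.succ u ∧ T.dist u 0 < T.dist i.succ 0 := by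
    intro i
    obtain ⟨p, hp⟩ := (hT.connected.preconnected i.succ 0).exists_walk_length_eq_dist
    cases p with
    | cons hadj q =>
      refine ⟨_, hadj, ?_⟩
      rw [← hp, SimpleGraph.Walk.length_cons]
      exact Nat.lt_succ_of_le (SimpleGraph.dist_le q)
  choose f hadj hdist using hpar
  have hroot : Rooted f := by
    intro v
    induction hd : T.dist v 0 using Nat.strong_induction_on generalizing v with
    | _ d ih =>
      rcases Fin.eq_zero_or_eq_succ v with rfl | ⟨i, rfl⟩
      · exact ⟨0, rfl⟩
      · obtain ⟨k, hk⟩ := ih _ (hd ▸ hdist i) _ rfl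
        exact ⟨k + 1, hk⟩
  refine ⟨f, hroot, ?_⟩
  have hle : parentGraph f ≤ T := by
    intro a b hab
    obtain ⟨i, ⟨rfl, rfl⟩ | ⟨rfl, rfl⟩⟩ := hroot.adj_iff.1 hab
    · exact hadj i
    · exact (hadj i).symm
  -- a tree is a minimal connected graph
  exact le_antisymm hle ((SimpleGraph.isTree_iff_minimal_connected.1 hT).2 hroot.connected hle)

/-! ### The determinant of a threshold graph -/

open Classical in
/-- The weight `x (min a b) * y (max a b)` of an edge of the graph with adjacency relation `A`. -/
noncomputable def edgeWeight {R : Type*} [CommRing R] (A : ℕ → ℕ → Prop)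
    (x y : ℕ → R) (a b : ℕ) : R :=
  if A a b then x (min a b) * y (max a b) else 0

/-- For vertices labelled from `0`, the vertex `i` is adjacent to the vertex at position `r` (also
counted from `0`) among the vertices other than `i`. In a threshold graph this says that the degree
of `i` is at least `r + 1`. -/
def Diag (A : ℕ → ℕ → Prop) (r i : ℕ) : Prop := (r < i ∧ A r i) ∨ (i ≤ r ∧ A i (r + 1))

open Classical in
/-- The factor of the product formula that belongs to `r`, on the vertices `0, …, m`. Up to the
shift of labels it is the sum over `i ≤ λ'_r`, with that range described by adjacency. -/
noncomputable def factor {R : Type*} [CommRing R] (A : ℕ → ℕ → Prop) (x y : ℕ → R) (m r : ℕ) : R :=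
  ∑ i ∈ range (m + 1), if Diag A r i then x (min i r) * y (max i r) else 0

lemma sum_range_ite_lt {R : Type*} [CommRing R] {k m : ℕ} (h : k ≤ m) (f : ℕ → R) :
    ∑ i ∈ range m, (if i < k then f i else 0) = ∑ i ∈ range k, f i := by
  rw [← sum_filter]
  congr 1
  ext i
  simp only [mem_filter, mem_range]
  omega

/-- The product formula at the level of determinants, over a field in which the partial sums of `x`
do not vanish. Eliminating the last vertex, whose neighbours are `0, …, k - 1`, gives the smaller
graph with weights `x` and `y'`, where `y'` differs from `y` only below `k`. -/
theorem det_threshold {K : Type*} [Field K] (A : ℕ → ℕ → Prop)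
    (hsymm : ∀ a b, A a b → A b a)
    (hsh : ∀ a b a' b', a' ≤ a → b' ≤ b → a < b → a' < b' → A a b → A a' b')
    (x : ℕ → K) (hx : ∀ k, 1 ≤ k → ∑ i ∈ range k, x i ≠ 0) (m : ℕ) (hm : 1 ≤ m) :
    ∀ (y : ℕ → K) (_ : ∀ j, 1 ≤ j → j ≤ m → A 0 j),
    (redLap (edgeWeight A x y) m).det = x 0 * y m * ∏ r ∈ Ico 1 m, factor A x y m r := by
  classical
  induction m, hm using Nat.le_induction with
  | base =>
    intro y h0
    have := hsymm _ _ (h0 1 le_rfl le_rfl)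
    simp [redLap, sum_range_succ, edgeWeight, this]
  | succ m hm ih =>
    intro y h0
    have hex : ∃ i, i = m + 1 ∨ ¬ A i (m + 1) := ⟨m + 1, Or.inl rfl⟩
    -- the neighbours of the last vertex form an initial segment of length `k`
    obtain ⟨k, hk1, hkm, hk⟩ : ∃ k, 1 ≤ k ∧ k ≤ m + 1 ∧ ∀ i ≤ m, (A i (m + 1) ↔ i < k) := by
      refine ⟨Nat.find hex, ?_, Nat.find_min' hex (Or.inl rfl), fun i hi => ?_⟩
      · rw [Nat.one_le_iff_ne_zero]
        intro h
        have := Nat.find_spec hex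
        rw [h] at this
        exact this.elim (by omega) (fun h' => h' (h0 _ (by omega) le_rfl))
      · constructor
        · intro h
          by_contra! hlt
          rcases Nat.find_spec hex with h' | h'
          · omega
          · exact h' (hsh _ _ _ _ hlt le_rfl (by omega) (by omega) h)
        · intro h
          have := Nat.find_min hex h
          tauto
    have hAk : ∀ i j, i < j → j ≤ m → j < k + 1 → i < k → A i j := fun i j hij hj hjk hi =>
      hsh i (m + 1) i j le_rfl (by omega) (by omega) hij ((hk i (by omega)).2 hi)
    have hX := hx k hk1
    set S := ∑ i ∈ range k, x i with hS
    -- the star-mesh correction is absorbed into `y`: it is `x a * (x b * y (m + 1) / S)` for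
    -- `a < b < k`
    let y' : ℕ → K := fun j => y j + if j < k then x j * y (m + 1) / S else 0
    have hfac : ∀ r, 1 ≤ r → r < m → factor A x y (m + 1) r = factor A x y' m r := by
      intro r hr1 hrm
      have hlast : Diag A r (m + 1) ↔ r < k := by
        rw [← hk r (by omega)]; simp only [Diag]
        constructor
        · rintro (h | h)
          · exact h.2
          · omega
        · exact fun h => Or.inl ⟨by omega, h⟩
      unfold factor
      rw [sum_range_succ]
      have hterm : ∀ i ∈ range (m + 1),
          (if Diag A r i then x (min i r) * y' (max i r) else 0) =
          (if Diag A r i then x (min i r) * y (max i r) else 0) +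
            (if i < k then (if r < k then x i * (x r * y (m + 1) / S) else 0) else 0) := by
        intro i hi
        rw [mem_range] at hi
        by_cases hrk : r < k
        · by_cases hik : i < k
          · have hD : Diag A r i := by
              rcases Nat.lt_or_ge r i with h | h
              · exact Or.inl ⟨h, hAk _ _ h (by omega) (by omega) (by omega)⟩
              · exact Or.inr ⟨h, hAk _ _ (by omega) (by omega) (by omega) (by omega)⟩
            simp only [hD, hrk, hik, if_true, y', max_lt_iff, and_self]
            rcases le_total i r with h | h <;>
              simp only [h, min_eq_left, min_eq_right, max_eq_left, max_eq_right] <;> ring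
          · simp [hik, y']
        · simp [hrk, y']
      rw [sum_congr rfl hterm, sum_add_distrib, sum_range_ite_lt hkm]
      congr 1
      by_cases hrk : r < k
      · rw [if_pos (hlast.2 hrk)]
        simp only [hrk, if_true]
        rw [← sum_mul, ← hS, min_eq_right (by omega), max_eq_left (by omega)]
        field_simp
      · simp [hlast, hrk]
    have hfacm : factor A x y (m + 1) m = S * y' m := by
      have hlast : Diag A m (m + 1) ↔ m < k := by
        rw [← hk m le_rfl]; simp [Diag]
      unfold factor
      rw [sum_range_succ]
      have hterm : ∀ i ∈ range (m + 1),
          (if Diag A m i then x (min i m) * y (max i m) else 0) =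
            (if i < k then x i * y m else 0) := by
        intro i hi
        rw [mem_range] at hi
        have hD : Diag A m i ↔ i < k := by
          rw [← hk i (by omega)]; simp only [Diag]
          constructor
          · rintro (h | h)
            · omega
            · exact h.2
          · exact fun h => Or.inr ⟨by omega, h⟩
        simp only [hD]
        rw [min_eq_left (by omega), max_eq_right (by omega)]
      rw [sum_congr rfl hterm, sum_range_ite_lt hkm, ← sum_mul, ← hS]
      simp only [hlast, y']
      split_ifs
      · simp only [Nat.le_succ, min_eq_right, max_eq_left]
        field_simp
      · ring
    have hrow : ∀ u ≤ m, edgeWeight A x y (m + 1) u = if u < k then x u * y (m + 1) else 0 := by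
      intro u hu
      have : A (m + 1) u ↔ u < k := by
        rw [← hk u hu]; exact ⟨hsymm _ _, hsymm _ _⟩
      simp only [edgeWeight, this]
      rw [min_eq_right (by omega), max_eq_left (by omega)]
    have hcol : ∀ u ≤ m, edgeWeight A x y u (m + 1) = if u < k then x u * y (m + 1) else 0 := by
      intro u hu
      simp only [edgeWeight, hk u hu]
      rw [min_eq_left (by omega), max_eq_right (by omega)]
    have hdet : (redLap (edgeWeight A x y) (m + 1)).det =
        S * y (m + 1) * (redLap (edgeWeight A x y') m).det := by
      by_cases hy : y (m + 1) = 0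
      · rw [hy, mul_zero, zero_mul]
        -- here `W = 0` and elimination is impossible, but the row of the last vertex vanishes
        refine Matrix.det_eq_zero_of_row_eq_zero (Fin.last m) fun j => ?_
        have hz : ∀ u ≤ m, edgeWeight A x y (m + 1) u = 0 := fun u hu => by
          rw [hrow u hu, hy]; simp
        simp only [redLap, Matrix.of_apply, Fin.val_last]
        rw [sum_range_succ, sum_eq_zero fun u hu => hz u (by rw [mem_range] at hu; omega), zero_add]
        split_ifs with h
        · rw [← h, Fin.val_last, sub_self]
        · have : (j : ℕ) ≠ m := fun h' => h (Fin.ext (by simp [h']))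
          rw [hz _ (by omega), sub_zero]
      · have hW : S * y (m + 1) = ∑ u ∈ range (m + 1), edgeWeight A x y (m + 1) u := by
          rw [sum_congr rfl fun u hu => hrow u (by rw [mem_range] at hu; omega),
            sum_range_ite_lt hkm, ← sum_mul]
        rw [det_redLap_succ _ m hW (mul_ne_zero hX hy)]
        congr 2
        apply redLap_congr
        intro a b ha hb hab
        rw [hcol a ha, hrow b hb]
        wlog hlt : a < b generalizing a b
        · have hs : ∀ z : ℕ → K, edgeWeight A x z a b = edgeWeight A x z b a := fun z => by
            have : A a b ↔ A b a := ⟨hsymm _ _, hsymm _ _⟩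
            simp only [edgeWeight, this, min_comm a b, max_comm a b]
          rw [hs, hs, ← this b a hb ha hab.symm (by omega)]
          ring
        simp only [edgeWeight, min_eq_left hlt.le, max_eq_right hlt.le, y']
        by_cases hbk : b < k
        · have hak : a < k := by omega
          simp only [hAk a b hlt hb (by omega) hak, hak, hbk, if_true]
          field_simp
        · simp [hbk]
    rw [hdet, ih y' fun j h1 h2 => h0 j h1 (by omega), prod_Ico_succ_top hm, hfacm,
      prod_congr rfl fun r hr => hfac r (mem_Ico.1 hr).1 (mem_Ico.1 hr).2]
    ring

/-! ### Spanning trees counted by the determinant -/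

/-- Both sides are the product of `x a * y b` over the edges `{a, b}` with `a < b`. -/
lemma prod_pow_indeg_outdeg {R : Type*} [CommRing R] {m : ℕ} {f : Fin m → Fin (m + 1)}
    (hf : Rooted f) (x y : ℕ → R) :
    ∏ i : Fin (m + 1), x i ^ indeg (parentGraph f) i * y i ^ outdeg (parentGraph f) i =
      ∏ v : Fin m, x (min (v + 1) (f v)) * y (max (v + 1) (f v)) := by
  classical
  set T := parentGraph f with hT
  have hin : ∀ i, indeg T i = #{j | T.Adj i j ∧ i < j} := fun i => by
    simp [indeg, Nat.card_eq_fintype_card, Fintype.card_subtype]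
  have hout : ∀ i, outdeg T i = #{j | T.Adj i j ∧ j < i} := fun i => by
    simp [outdeg, Nat.card_eq_fintype_card, Fintype.card_subtype]
  have h1 : ∏ i : Fin (m + 1), x i ^ indeg T i * y i ^ outdeg T i =
      ∏ p : Fin (m + 1) × Fin (m + 1) with T.Adj p.1 p.2 ∧ p.1 < p.2, x p.1 * y p.2 := by
    rw [prod_filter, Fintype.prod_prod_type, prod_mul_distrib]
    have hx : ∏ i : Fin (m + 1), x i ^ indeg T i =
        ∏ i : Fin (m + 1), ∏ j : Fin (m + 1), if T.Adj i j ∧ i < j then x i else 1 :=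
      prod_congr rfl fun i _ => by rw [← prod_filter, prod_const, hin]
    have hy : ∏ i : Fin (m + 1), y i ^ outdeg T i =
        ∏ i : Fin (m + 1), ∏ j : Fin (m + 1), if T.Adj i j ∧ i < j then y j else 1 := by
      rw [prod_comm]
      refine prod_congr rfl fun i _ => ?_
      rw [← prod_filter, prod_const, hout]
      simp only [T.adj_comm]
    rw [hx, hy, ← prod_mul_distrib]
    refine prod_congr rfl fun i _ => ?_
    rw [← prod_mul_distrib]
    refine prod_congr rfl fun j _ => ?_
    split_ifs <;> simp
  rw [h1]
  symm
  refine prod_bij (fun v _ => (min v.succ (f v), max v.succ (f v))) ?_ ?_ ?_ ?_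
  · intro v _
    have hne := hf.parent_ne v
    have hadj : T.Adj v.succ (f v) := hf.adj_iff.2 ⟨v, Or.inl ⟨rfl, rfl⟩⟩
    rw [mem_filter]
    refine ⟨mem_univ _, ?_, ?_⟩
    · rcases le_total v.succ (f v) with h | h
      · simpa [h] using hadj
      · simpa [h] using hadj.symm
    · rcases lt_or_gt_of_ne hne with h | h <;> simp [h]
  · intro u _ v _ huv
    rw [Prod.mk.injEq] at huv
    obtain ⟨hmin, hmax⟩ := huv
    by_contra hne
    -- two distinct vertices yielding the same edge would be parents of each other
    have hswap : u.succ = f v ∧ f u = v.succ := by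
      have h' : u.succ ≠ v.succ := fun h => hne (Fin.succ_injective _ h)
      rcases le_total u.succ (f u) with h | h <;> rcases le_total v.succ (f v) with h2 | h2 <;>
        simp only [h, h2, min_eq_left, min_eq_right, max_eq_left, max_eq_right] at hmin hmax
      · exact absurd hmin h'
      · exact ⟨hmin, hmax⟩
      · exact ⟨hmax, hmin⟩
      · exact absurd hmax h'
    refine hf.iterate_ne (Fin.succ_ne_zero u) (k := 2) (by omega) ?_
    change step f (step f u.succ) = u.succ
    rw [step_succ, hswap.2, step_succ, hswap.1]
  · rintro ⟨a, b⟩ hab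
    rw [mem_filter] at hab
    obtain ⟨-, hadj, hlt⟩ := hab
    obtain ⟨i, ⟨h1, h2⟩ | ⟨h1, h2⟩⟩ := hf.adj_iff.1 hadj
    · refine ⟨i, mem_univ _, ?_⟩
      simp only at h1 h2 hlt
      rw [← h1, ← h2, min_eq_left hlt.le, max_eq_right hlt.le]
    · refine ⟨i, mem_univ _, ?_⟩
      simp only at h1 h2 hlt
      rw [← h1, ← h2, min_eq_right hlt.le, max_eq_left hlt.le]
  · intro v _
    rcases le_total v.succ (f v) with h | h
    · have h' : (v : ℕ) + 1 ≤ f v := by simpa using Fin.le_def.1 h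
      simp [h, h']
    · have h' : (f v : ℕ) ≤ v + 1 := by simpa using Fin.le_def.1 h
      simp [h, h']

/-- The adjacency relation of `G` on natural-number labels, false outside `0, …, n - 1`. -/
def natAdj {n : ℕ} (G : SimpleGraph (Fin n)) (a b : ℕ) : Prop :=
  ∃ (ha : a < n) (hb : b < n), G.Adj ⟨a, ha⟩ ⟨b, hb⟩

lemma natAdj_val {n : ℕ} (G : SimpleGraph (Fin n)) (i j : Fin n) :
    natAdj G i j ↔ G.Adj i j :=
  ⟨fun ⟨_, _, h⟩ => h, fun h => ⟨i.2, j.2, h⟩⟩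

/-- Matrix-tree theorem for the spanning trees of `G`, weighted by in- and outdegrees. -/
theorem finsum_spanningTrees_eq_det {R : Type*} [CommRing R] [IsDomain R] {m : ℕ}
    (G : SimpleGraph (Fin (m + 1))) (x y : ℕ → R) :
    (∑ᶠ T ∈ spanningTrees G, ∏ i : Fin (m + 1), x i ^ indeg T i * y i ^ outdeg T i) =
      (redLap (edgeWeight (natAdj G) x y) m).det := by
  classical
  rw [det_redLap_eq_sum]
  have hw : ∀ f : Fin m → Fin (m + 1), Rooted f →
      ∏ i : Fin m, edgeWeight (natAdj G) x y (i + 1) (f i) =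
        if parentGraph f ≤ G then
          ∏ i : Fin (m + 1), x i ^ indeg (parentGraph f) i * y i ^ outdeg (parentGraph f) i
        else 0 := by
    intro f hf
    have hle : parentGraph f ≤ G ↔ ∀ i : Fin m, G.Adj i.succ (f i) := by
      constructor
      · exact fun h i => h (hf.adj_iff.2 ⟨i, Or.inl ⟨rfl, rfl⟩⟩)
      · intro h a b hab
        obtain ⟨i, ⟨rfl, rfl⟩ | ⟨rfl, rfl⟩⟩ := hf.adj_iff.1 hab
        · exact h i
        · exact (h i).symm
    have hA : ∀ i : Fin m, natAdj G (i + 1) (f i) ↔ G.Adj i.succ (f i) := fun i => by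
      rw [← natAdj_val, Fin.val_succ]
    rw [prod_pow_indeg_outdeg hf]
    split_ifs with h
    · exact prod_congr rfl fun i _ => if_pos ((hA i).2 (hle.1 h i))
    · rw [hle] at h
      push Not at h
      obtain ⟨i, hi⟩ := h
      exact prod_eq_zero (mem_univ i) (if_neg (mt (hA i).1 hi))
  rw [sum_congr rfl fun f hf => hw f (mem_filter.1 hf).2, ← sum_filter, filter_filter,
    ← finsum_mem_coe_finset]
  symm
  refine finsum_mem_eq_of_bijOn parentGraph ⟨?_, ?_, ?_⟩ fun f _ => rfl
  · intro f hf
    simp only [coe_filter, mem_univ, true_and, Set.mem_ofPred_eq] at hf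
    exact ⟨hf.2, hf.1.isTree⟩
  · intro f hf g hg h
    simp only [coe_filter, mem_univ, true_and, Set.mem_ofPred_eq] at hf hg
    exact hf.1.eq_of_parentGraph_eq hg.1 h
  · rintro T ⟨hTG, hT⟩
    obtain ⟨f, hf, rfl⟩ := exists_rooted_of_isTree hT
    exact ⟨f, by simpa using ⟨hf, hTG⟩, rfl⟩

/-! ### The enumerator -/

/-- A down-closed predicate on `Fin n` holds exactly on an initial segment. -/
lemma lt_card_filter_iff {n : ℕ} (P : Fin n → Prop) [DecidablePred P]
    (hP : ∀ i j, i ≤ j → P j → P i) (i : Fin n) : (i : ℕ) < #{j | P j} ↔ P i := by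
  constructor
  · intro h
    by_contra hi
    have hsub : ({j | P j} : Finset (Fin n)) ⊆ Iio i := fun j hj => by
      rw [mem_Iio]
      by_contra! hij
      exact hi (hP i j hij (mem_filter.1 hj).2)
    have := card_le_card hsub
    rw [Fin.card_Iio] at this
    omega
  · intro hi
    have hsub : Iic i ⊆ ({j | P j} : Finset (Fin n)) := fun j hj =>
      mem_filter.2 ⟨mem_univ _, hP j i (mem_Iic.1 hj) hi⟩
    have := card_le_card hsub
    rw [Fin.card_Iic] at this
    omega

lemma map_factor {R S : Type*} [CommRing R] [CommRing S] (φ : R →+* S) (A : ℕ → ℕ → Prop)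
    (x y : ℕ → R) (m r : ℕ) : φ (factor A x y m r) = factor A (φ ∘ x) (φ ∘ y) m r := by
  simp [factor, apply_ite φ]

lemma map_redLap {R S : Type*} [CommRing R] [CommRing S] (φ : R →+* S) (A : ℕ → ℕ → Prop)
    (x y : ℕ → R) (m : ℕ) :
    φ.mapMatrix (redLap (edgeWeight A x y) m) = redLap (edgeWeight A (φ ∘ x) (φ ∘ y)) m := by
  ext i j
  simp [redLap, edgeWeight, apply_ite φ]

/-- Theorem: weighted spanning tree enumerator of a connected threshold graph,
by indegrees and outdegrees.  Vertices are `Fin n`, thought of as `{1,…,n}`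
via `i ↦ i + 1`; `x_k = X (Sum.inl k)` and `y_k = X (Sum.inr k)` for `1 ≤ k ≤ n`.
`lam` is the (weakly decreasing) degree sequence and `conj` its conjugate partition. -/
theorem threshold_in_out_enumerator (n : ℕ) (hn : 2 ≤ n)
    (G : SimpleGraph (Fin n)) (hconn : G.Connected)
    (lam : Fin n → ℕ)
    (hdeg : ∀ i, lam i = Nat.card (G.neighborSet i))
    (hanti : ∀ i j : Fin n, i ≤ j → lam j ≤ lam i)
    (hthr : ∀ i j : Fin n, G.Adj i j ↔
      j ≠ i ∧ (if (j : ℕ) < (i : ℕ) then (j : ℕ) + 1 else (j : ℕ)) ≤ lam i)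
    (conj : ℕ → ℕ)
    (hconj : ∀ r, conj r = ((univ : Finset (Fin n)).filter fun i => r ≤ lam i).card) :
    (∑ᶠ T ∈ spanningTrees G,
        ∏ i : Fin n,
          (X (Sum.inl ((i : ℕ) + 1)) : MvPolynomial (ℕ ⊕ ℕ) ℤ) ^ indeg T i *
            (X (Sum.inr ((i : ℕ) + 1)) : MvPolynomial (ℕ ⊕ ℕ) ℤ) ^ outdeg T i)
      = X (Sum.inl 1) * X (Sum.inr n) *
          ∏ r ∈ Finset.Icc 2 (n - 1),
            ∑ i ∈ Finset.Icc 1 (conj r),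
              X (Sum.inl (min i r)) * X (Sum.inr (max i r)) := by
  classical
  obtain ⟨m, rfl⟩ : ∃ m, n = m + 1 := ⟨n - 1, by omega⟩
  let x : ℕ → MvPolynomial (ℕ ⊕ ℕ) ℤ := fun a => X (Sum.inl (a + 1))
  let y : ℕ → MvPolynomial (ℕ ⊕ ℕ) ℤ := fun a => X (Sum.inr (a + 1))
  refine (finsum_spanningTrees_eq_det G x y).trans ?_
  have hdown : ∀ i j j' : Fin (m + 1), G.Adj i j → j' ≤ j → j' ≠ i → G.Adj i j' := by
    intro i j j' h hj hne
    rw [hthr] at h ⊢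
    refine ⟨hne, le_trans ?_ h.2⟩
    have h1 := Fin.le_def.1 hj
    have h2 : (j : ℕ) ≠ i := fun h' => h.1 (Fin.ext h')
    split_ifs <;> omega
  have hsymm : ∀ a b, natAdj G a b → natAdj G b a := fun a b ⟨ha, hb, h⟩ => ⟨hb, ha, h.symm⟩
  have hsh : ∀ a b a' b', a' ≤ a → b' ≤ b → a < b → a' < b' → natAdj G a b → natAdj G a' b' := by
    rintro a b a' b' haa hbb hab hab' ⟨ha, hb, h⟩
    refine ⟨by omega, by omega, ?_⟩
    have h1 : G.Adj ⟨b, hb⟩ ⟨a', by omega⟩ :=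
      hdown _ _ _ h.symm (by simpa using haa) (by simp; omega)
    exact hdown _ _ _ h1.symm (by simpa using hbb) (by simp; omega)
  have h0 : ∀ j, 1 ≤ j → j ≤ m → natAdj G 0 j := by
    intro j h1 hj
    have hne : (0 : Fin (m + 1)) ≠ ⟨j, by omega⟩ := by
      intro h; have := congrArg Fin.val h; simp at this; omega
    obtain ⟨p⟩ := hconn.preconnected ⟨j, by omega⟩ 0
    cases p with
    | nil => exact absurd rfl hne
    | cons hadj q =>
      exact ⟨by omega, by omega, (hdown _ _ 0 hadj (Fin.zero_le _) hne).symm⟩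
  -- the evaluation of the determinant takes place in the fraction field
  let φ := algebraMap (MvPolynomial (ℕ ⊕ ℕ) ℤ) (FractionRing (MvPolynomial (ℕ ⊕ ℕ) ℤ))
  have hφ : Function.Injective φ := IsFractionRing.injective _ _
  have hx : ∀ k, 1 ≤ k → ∑ i ∈ range k, (φ ∘ x) i ≠ 0 := by
    intro k hk h
    simp only [Function.comp_apply] at h
    rw [← map_sum, map_eq_zero_iff φ hφ] at h
    have := congrArg (MvPolynomial.eval fun _ => (1 : ℤ)) h
    simp [x] at this
    omega
  have hdet : (redLap (edgeWeight (natAdj G) x y) m).det =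
      x 0 * y m * ∏ r ∈ Ico 1 m, factor (natAdj G) x y m r := by
    apply hφ
    rw [RingHom.map_det, map_redLap, det_threshold _ hsymm hsh _ hx m (by omega) _ h0]
    simp only [map_mul, map_prod, map_factor, Function.comp_apply]
  rw [hdet]
  congr 1
  rw [prod_nbij' (t := Icc 2 (m + 1 - 1)) (· + 1) (· - 1)]
  · intro r hr; simp only [mem_Ico, mem_Icc] at hr ⊢; omega
  · intro r hr; simp only [mem_Ico, mem_Icc] at hr ⊢; omega
  · intro r hr; rfl
  · intro r hr; simp only [mem_Icc] at hr; omega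
  intro r hr
  rw [mem_Ico] at hr
  have hlt : ∀ i : Fin (m + 1), (i : ℕ) < conj (r + 1) ↔ r + 1 ≤ lam i := fun i => by
    rw [hconj]
    exact lt_card_filter_iff _ (fun i j hij h => h.trans (hanti i j hij)) i
  have hle : conj (r + 1) ≤ m + 1 := by
    rw [hconj]; simpa using card_filter_le univ fun i : Fin (m + 1) => r + 1 ≤ lam i
  -- both conditions say that the degree of `i` is at least `r + 1`
  have hD : ∀ i, i < m + 1 → (Diag (natAdj G) r i ↔ i < conj (r + 1)) := by
    intro i hi
    rw [hlt ⟨i, hi⟩]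
    rcases Nat.lt_or_ge r i with h | h
    · have h1 : natAdj G r i ↔ G.Adj ⟨i, hi⟩ ⟨r, by omega⟩ := by
        rw [G.adj_comm, ← natAdj_val]
      have h2 : r ≠ i := by omega
      simp [Diag, h, h1, hthr, h2, Nat.not_le.2 h]
    · have h1 : natAdj G i (r + 1) ↔ G.Adj ⟨i, hi⟩ ⟨r + 1, by omega⟩ := by
        rw [← natAdj_val]
      have h2 : r + 1 ≠ i := by omega
      have h3 : ¬ r + 1 < i := by omega
      simp [Diag, h, h1, hthr, h2, h3, Nat.not_lt.2 h]
  unfold factor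
  rw [sum_congr rfl fun i hi => if_congr (hD i (mem_range.1 hi)) rfl rfl, sum_range_ite_lt hle]
  refine sum_nbij' (· + 1) (· - 1) ?_ ?_ ?_ ?_ ?_
  · intro i hi; simp only [mem_range, mem_Icc] at hi ⊢; omega
  · intro i hi; simp only [mem_range, mem_Icc] at hi ⊢; omega
  · intro i hi; rfl
  · intro i hi; simp only [mem_Icc] at hi; omega
  · intro i hi
    simp only [x, y, Nat.add_min_add_right, Nat.add_max_add_right]
end

section
/- Let n ≥ 2 and let G be a connected threshold graph on vertex set {1,…,n} with degree sequence λ = (λ_1 ≥ ⋯ ≥ λ_n) and conjugate partition λ'. Then in ℤ[x_1,…,x_n], Σ_{T ∈ Tree(G)} ∏_{i=1}^n x_i^{deg_T(i)} = x_1 x_2 ⋯ x_n · ∏_{r=2}^{n−1} ( x_1 + x_2 + ⋯ + x_{λ'_r} ). -/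
/-!
The spanning trees of a cone over a graph `H` with apex `0`, rooted at the apex, are encoded by
their parent functions, that is, by the rooted spanning forests of `H`: a vertex whose parent is
the apex is a root.  In the degree monomial of such a tree every non-apex vertex `a` contributes
`x_a · x_{parent a}`, so the degree enumerator of the cone is `∏ x_a · W_H(x_0)`, where
`W_H(t) = ∑_F t^{#roots} ∏_{a not a root} x_{parent a}` is `forestSum`
(`sum_spanningTrees_cone`).

The forest enumerator behaves well under the two operations that build threshold graphs.
* An isolated vertex multiplies it by `t` (`forestSum_isolated`).
* For the cone `v ∨ H`, with `s` the sum of the weights of `H`,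
  `(t + x_v) · W_{v ∨ H}(t) = t (t + x_v + s) · W_H(t + x_v)` (`forestSum_cone`).
  Forgetting `v` turns a forest of `v ∨ H` into a forest of `H` in which every root used to be
  either a root or a child of `v`, with total weight `t + x_v`.  If `v` is a root this choice is
  free.  If the parent of `v` is `j`, then the root of the component of `j` cannot be a child of
  `v`, and the other choices are free, whence a factor `t` in place of `t + x_v`.

Removing the last vertex if it is isolated and the first (dominating) one otherwise, induction
gives `W_H(t) = t ∏_{r=1}^{m-1} (t + ∑_{λ_i ≥ r} x_i)` for a threshold graph `H` on `m ≥ 1`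
vertices (`forestSum_threshold`).  A connected threshold graph on at least two vertices is the
cone over such an `H` with apex the first vertex, which proves the theorem, since `{i | λ_i ≥ r}`
consists of the first `λ'_r` vertices.
-/

open MvPolynomial Finset

namespace ThresholdTrees

/-! ### Rooted forests as parent functions -/

section forests

variable {V : Type*}

/-- `F`, seen as a parent function (`none` marks a root), describes a rooted forest on `V`:
some height function strictly decreases from each vertex to its parent. -/
def IsForest (F : V → Option V) : Prop :=
  ∃ h : V → ℕ, ∀ a b, F a = some b → h b < h a

/-- Every non-root vertex is related by `A` to its parent. -/
def Respects (A : V → V → Prop) (F : V → Option V) : Prop :=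
  ∀ a b, F a = some b → A a b

open scoped Classical in
/-- The enumerator of rooted spanning forests of the relation `A`: a root has weight `t`, and a
vertex with parent `b` has weight `x b`. -/
noncomputable def forestSum [Fintype V] [DecidableEq V] {R : Type*} [CommRing R]
    (A : V → V → Prop) (x : V → R) (t : R) : R :=
  ∑ F : V → Option V, if IsForest F ∧ Respects A F then ∏ a, (F a).elim t x else 0

/-- A forest has a function sending each vertex to the root of its component; no height function
increases along it. -/
theorem IsForest.exists_root {F : V → Option V} (hF : IsForest F) :
    ∃ ρ : V → V, (∀ a, F (ρ a) = none) ∧ (∀ a, F a = none → ρ a = a) ∧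
      (∀ a b, F a = some b → ρ a = ρ b) ∧
      ∀ h : V → ℕ, (∀ a b, F a = some b → h b < h a) → ∀ a, h (ρ a) ≤ h a := by
  obtain ⟨h₀, hh₀⟩ := hF
  let S : V → V → Prop := fun a b => F a = some b
  have key : ∀ k a, h₀ a ≤ k → ∃ r, F r = none ∧ Relation.ReflTransGen S a r := by
    intro k
    induction k with
    | zero =>
      intro a ha
      refine ⟨a, ?_, .refl⟩
      cases hFa : F a with
      | none => rfl
      | some b => have := hh₀ _ _ hFa; omega
    | succ k ih =>
      intro a ha
      cases hFa : F a with
      | none => exact ⟨a, hFa, .refl⟩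
      | some b =>
        obtain ⟨r, hr, hbr⟩ := ih b (by have := hh₀ _ _ hFa; omega)
        exact ⟨r, hr, .head hFa hbr⟩
  choose ρ hρ hρ' using fun a => key _ a le_rfl
  have uniq : ∀ a r, F r = none → Relation.ReflTransGen S a r → ∀ r', F r' = none →
      Relation.ReflTransGen S a r' → r = r' := by
    intro a r hr har
    induction har using Relation.ReflTransGen.head_induction_on with
    | refl =>
      intro r' _ h
      rcases Relation.ReflTransGen.cases_head h with h | ⟨c, hc, _⟩
      · exact h
      · simp [S, hr] at hc
    | head hab _ ih =>
      intro r' hr' h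
      rcases Relation.ReflTransGen.cases_head h with h | ⟨c, hc, hc'⟩
      · subst h; simp [S, hr'] at hab
      · have : c = _ := Option.some.inj (hc.symm.trans hab)
        subst this
        exact ih _ hr' hc'
  refine ⟨ρ, hρ, fun a ha => (uniq a a ha .refl _ (hρ a) (hρ' a)).symm, fun a b hab =>
    uniq a _ (hρ a) (hρ' a) _ (hρ b) (.head hab (hρ' b)), fun h hh a => ?_⟩
  have : ∀ r, Relation.ReflTransGen S a r → h r ≤ h a := by
    intro r hr
    induction hr with
    | refl => exact le_rfl
    | tail _ hbc ih => exact (hh _ _ hbc).le.trans ih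
  exact this _ (hρ' a)

theorem forestSum_equiv [Fintype V] [DecidableEq V] {V' : Type*} [Fintype V'] [DecidableEq V'] {R : Type*} [CommRing R]
    (e : V' ≃ V) (A : V → V → Prop) (x : V → R) (t : R) :
    forestSum A x t = forestSum (fun a b => A (e a) (e b)) (fun a => x (e a)) t := by
  unfold forestSum
  refine Fintype.sum_equiv (e.symm.arrowCongr (Equiv.optionCongr e.symm)) _ _ fun F => ?_
  have hval : ∀ a b, (e.symm.arrowCongr (Equiv.optionCongr e.symm) F) a = some b ↔
      F (e a) = some (e b) := by
    intro a b
    cases h : F (e a) <;> simp [Equiv.arrowCongr, h, Equiv.symm_apply_eq]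
  have h1 : IsForest F ↔ IsForest (e.symm.arrowCongr (Equiv.optionCongr e.symm) F) := by
    constructor
    · rintro ⟨h, hh⟩
      exact ⟨fun a => h (e a), fun a b hab => hh _ _ ((hval a b).1 hab)⟩
    · rintro ⟨h, hh⟩
      refine ⟨fun a => h (e.symm a), fun a b hab => hh _ _ ((hval _ _).2 ?_)⟩
      simpa using hab
  have h2 : Respects A F ↔ Respects (fun a b => A (e a) (e b))
      (e.symm.arrowCongr (Equiv.optionCongr e.symm) F) := by
    constructor
    · intro h a b hab
      exact h _ _ ((hval a b).1 hab)
    · intro h a b hab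
      have := h (e.symm a) (e.symm b) ((hval _ _).2 (by simpa using hab))
      simpa using this
  rw [← h1, ← h2]
  congr 1
  refine Fintype.prod_equiv e.symm _ _ fun a => ?_
  cases h : F a <;> simp [Equiv.arrowCongr, h, Equiv.optionCongr]

/-- Adding an isolated vertex `none` multiplies the forest enumerator by `t`. -/
theorem forestSum_isolated [Fintype V] [DecidableEq V] {R : Type*} [CommRing R] (B : Option V → Option V → Prop)
    (h₁ : ∀ p, ¬ B none p) (h₂ : ∀ p, ¬ B p none) (x : Option V → R) (t : R) :
    forestSum B x t = t * forestSum (fun a b => B (some a) (some b)) (fun a => x (some a)) t := by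
  unfold forestSum
  rw [Finset.mul_sum]
  symm
  let e : (V → Option V) → (Option V → Option (Option V)) :=
    fun F p => p.elim none (fun a => (F a).map some)
  have he : Function.Injective e := by
    intro F F' h
    funext a
    have := congrFun h (some a)
    exact Option.map_injective (Option.some_injective V) this
  refine Finset.sum_of_injOn e he.injOn (by simp) ?_ ?_
  · intro f _ hf
    rw [if_neg]
    rintro ⟨-, hB⟩
    apply hf
    have h0 : f none = none := by
      cases h : f none with
      | none => rfl
      | some p => exact (h₁ _ (hB _ _ h)).elim
    refine ⟨fun a => (f (some a)).bind id, by simp, ?_⟩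
    funext p
    cases p with
    | none => simp [e, h0]
    | some a =>
      cases h : f (some a) with
      | none => simp [e, h]
      | some q =>
        cases q with
        | none => exact (h₂ _ (hB _ _ h)).elim
        | some b => simp [e, h]
  · intro F _
    have h1 : IsForest F ↔ IsForest (e F) := by
      constructor
      · rintro ⟨h, hh⟩
        refine ⟨fun p => p.elim 0 h, ?_⟩
        rintro (_ | a) (_ | b) hab <;> simp [e] at hab ⊢
        exact hh _ _ hab
      · rintro ⟨h, hh⟩
        exact ⟨fun a => h (some a), fun a b hab => hh _ _ (by simp [e, hab])⟩
    have h2 : Respects (fun a b => B (some a) (some b)) F ↔ Respects B (e F) := by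
      constructor
      · rintro h (_ | a) (_ | b) hab <;> simp [e] at hab ⊢
        exact h _ _ hab
      · intro h a b hab
        exact h _ _ (by simp [e, hab])
    rw [← h1, ← h2, mul_ite, mul_zero, Fintype.prod_option]
    congr 2
    refine Finset.prod_congr rfl fun a _ => ?_
    cases h : F a <;> simp [e, h]

/-- Identify the outer root marker `none` with the vertex `some none`.  Applied to the parents in
a forest on `Option V`, it yields the forest on `V` obtained by deleting the vertex `none`, whose
children become roots. -/
def collapse (o : Option (Option V)) : Option V := o.bind id

/-- Summation over the fibres of `collapse`: in the fibre over `F`, each root of `F` has two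
independent choices and each non-root has one, so the sum over a fibre factors. -/
theorem sum_collapse [Fintype V] [DecidableEq V] {R : Type*} [CommRing R] (P : (V → Option V) → Prop)
    [DecidablePred P]
    (w : (V → Option V) → V → Option (Option V) → R) :
    (∑ g : V → Option (Option V), if P (fun a => collapse (g a)) then
        ∏ a, w (fun a => collapse (g a)) a (g a) else 0) =
      ∑ F : V → Option V, if P F then
        ∏ a, (F a).elim (w F a none + w F a (some none)) (fun b => w F a (some (some b))) else 0 := by
  have h1 : ∀ F : V → Option V,
      (∏ a, (F a).elim (w F a none + w F a (some none)) (fun b => w F a (some (some b)))) =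
      ∑ g : V → Option (Option V), if (fun a => collapse (g a)) = F then
        ∏ a, w F a (g a) else 0 := by
    intro F
    have : ∀ a, (F a).elim (w F a none + w F a (some none)) (fun b => w F a (some (some b))) =
        ∑ o : Option (Option V), if collapse o = F a then w F a o else 0 := by
      intro a
      rw [Fintype.sum_option, Fintype.sum_option]
      cases h : F a with
      | none => simp [collapse]
      | some b => simp [collapse]
    rw [Finset.prod_congr rfl fun a _ => this a, Finset.prod_univ_sum, Fintype.piFinset_univ]
    refine Finset.sum_congr rfl fun g _ => ?_
    rw [Finset.prod_ite_zero]
    simp [funext_iff]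
  symm
  calc _ = ∑ F : V → Option V, ∑ g : V → Option (Option V),
        if (fun a => collapse (g a)) = F then (if P F then ∏ a, w F a (g a) else 0) else 0 := by
        refine Finset.sum_congr rfl fun F _ => ?_
        split_ifs with hP
        · exact h1 F
        · simp
    _ = _ := by
        rw [Finset.sum_comm]
        simp

/-- The recursion for adding a dominating vertex `none`. -/
theorem forestSum_cone [Fintype V] [DecidableEq V] {R : Type*} [CommRing R] (B : Option V → Option V → Prop)
    (h₁ : ∀ a, B none (some a)) (h₂ : ∀ a, B (some a) none) (x : Option V → R) (t : R) :
    forestSum B x t * (t + x none) =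
      forestSum (fun a b => B (some a) (some b)) (fun a => x (some a)) (t + x none) *
        (t * (t + x none + ∑ a, x (some a))) := by
  classical
  set A : V → V → Prop := fun a b => B (some a) (some b)
  let c : Option (Option V) → (V → Option (Option V)) → (Option V → Option (Option V)) :=
    fun o g p => p.elim o g
  let Φ : (Option V → Option (Option V)) → R := fun f =>
    if IsForest f ∧ Respects B f then ∏ p, (f p).elim t x else 0
  let Good : (V → Option V) → Prop := fun F => IsForest F ∧ Respects A F
  have hfs : ∀ (y : V → R) (u : R), forestSum A y u =
      ∑ F : V → Option V, if Good F then ∏ a, (F a).elim u y else 0 := by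
    intro y u
    unfold forestSum
    exact Finset.sum_congr rfl fun F _ => by congr
  have hsplit : forestSum B x t = ∑ o, ∑ g, Φ (c o g) := by
    rw [← Fintype.sum_prod_type']
    unfold forestSum
    refine Fintype.sum_equiv (Equiv.piOptionEquivProd (β := fun _ => Option (Option V))) _ _
      fun f => ?_
    have : c (Equiv.piOptionEquivProd (β := fun _ => Option (Option V)) f).1
        (Equiv.piOptionEquivProd (β := fun _ => Option (Option V)) f).2 = f := by
      funext p
      cases p <;> rfl
    simp only [Φ]
    rw [this]
  have hres : ∀ o g, o ≠ some none → (Respects B (c o g) ↔ Respects A fun a => collapse (g a)) := by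
    intro o g ho
    constructor
    · intro h a b hab
      refine h (some a) (some b) ?_
      simpa [collapse, c, Option.bind_eq_some_iff] using hab
    · rintro h (_ | a) (_ | b) hab
      · exact (ho hab).elim
      · exact h₁ b
      · exact h₂ a
      · refine h a b ?_
        simp only [c, Option.elim] at hab
        simp [collapse, hab]
  have hrestrict : ∀ o g (h : Option V → ℕ), (∀ p q, c o g p = some q → h q < h p) →
      ∀ a b, collapse (g a) = some b → h (some b) < h (some a) := by
    intro o g h hh a b hab
    refine hh _ _ ?_
    simpa [collapse, c, Option.bind_eq_some_iff] using hab
  -- If the new vertex is a root, each root of the collapsed forest may be hung below it or not.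
  have hnone : ∑ g, Φ (c none g) = t * forestSum A (fun a => x (some a)) (t + x none) := by
    have hfor : ∀ g, IsForest (c none g) ↔ IsForest fun a => collapse (g a) := by
      intro g
      constructor
      · rintro ⟨h, hh⟩
        exact ⟨fun a => h (some a), hrestrict _ _ h hh⟩
      · rintro ⟨h, hh⟩
        refine ⟨fun p => p.elim 0 (fun a => h a + 1), ?_⟩
        rintro (_ | a) (_ | b) hab
        · simp [c] at hab
        · simp [c] at hab
        · simp
        · simp only [Option.elim, add_lt_add_iff_right]
          refine hh a b ?_
          simp only [c, Option.elim] at hab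
          simp [collapse, hab]
    have := sum_collapse Good (fun _ _ o => o.elim t x)
    simp only [Option.elim_none, Option.elim_some] at this
    rw [hfs, ← this, Finset.mul_sum]
    refine Finset.sum_congr rfl fun g _ => ?_
    simp only [Φ, Good]
    rw [hfor, hres _ _ (by simp), Fintype.prod_option, mul_ite, mul_zero]
    rfl
  have hself : ∀ g, Φ (c (some none) g) = 0 := by
    intro g
    refine if_neg ?_
    rintro ⟨⟨h, hh⟩, -⟩
    exact lt_irrefl _ (hh none none rfl)
  -- If the new vertex has parent `j`, the root of the component of `j` must remain a root.
  have hsome : ∀ j, (∑ g, Φ (c (some (some j)) g)) * (t + x none) =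
      x (some j) * (t * forestSum A (fun a => x (some a)) (t + x none)) := by
    intro j
    have hroot : ∀ F : V → Option V, ∃ ρ : V → V, IsForest F →
      (∀ a, F (ρ a) = none) ∧ (∀ a, F a = none → ρ a = a) ∧
      (∀ a b, F a = some b → ρ a = ρ b) ∧
      ∀ h : V → ℕ, (∀ a b, F a = some b → h b < h a) → ∀ a, h (ρ a) ≤ h a := by
      intro F
      by_cases hF : IsForest F
      · obtain ⟨ρ, hρ⟩ := hF.exists_root
        exact ⟨ρ, fun _ => hρ⟩
      · exact ⟨id, fun h => (hF h).elim⟩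
    choose ρ hρ using hroot
    let w : (V → Option V) → V → Option (Option V) → R := fun F a o =>
      if a = ρ F j → o = none then o.elim t x else 0
    have hfor : ∀ g, IsForest (c (some (some j)) g) ↔
        (IsForest fun a => collapse (g a)) ∧ g (ρ (fun a => collapse (g a)) j) = none := by
      intro g
      constructor
      · rintro ⟨h, hh⟩
        have hF : IsForest fun a => collapse (g a) :=
          ⟨fun a => h (some a), hrestrict _ _ h hh⟩
        refine ⟨hF, ?_⟩
        obtain ⟨r1, r2, r3, r4⟩ := hρ _ hF
        have hle := r4 (fun a => h (some a)) (hrestrict _ _ h hh) j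
        have hj : h (some j) < h none := hh none (some j) rfl
        have hr := r1 j
        generalize ρ (fun a => collapse (g a)) j = r at *
        rcases hg : g r with _ | _ | b
        · rfl
        · have : h none < h (some r) := hh (some r) none hg
          omega
        · simp [collapse, hg] at hr
      · rintro ⟨hF, hgr⟩
        obtain ⟨r1, r2, r3, -⟩ := hρ _ hF
        generalize ρ (fun a => collapse (g a)) = r at *
        obtain ⟨h, hh⟩ := hF
        -- The component of `j` keeps its heights, the new vertex sits above `j`, and all other
        -- components are lifted above the new vertex.
        let M := h j + 1
        refine ⟨fun p => p.elim M (fun a => if r a = r j then h a else h a + M + 1), ?_⟩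
        rintro (_ | a) (_ | b) hab
        · simp [c] at hab
        · simp only [c, Option.elim, Option.some.injEq] at hab
          subst hab
          simp [M]
        · simp only [c, Option.elim] at hab ⊢
          have : r a = a := r2 a (by simp [collapse, hab])
          rw [if_neg]
          · omega
          · intro h'
            rw [← h', this, hab] at hgr
            simp at hgr
        · simp only [c, Option.elim] at hab ⊢
          have hab' : collapse (g a) = some b := by simp [collapse, hab]
          have := hh a b hab'
          rw [r3 a b hab']
          split_ifs <;> omega
    have hcol := sum_collapse Good w
    have hsum : ∑ g, Φ (c (some (some j)) g) = x (some j) * ∑ g : V → Option (Option V),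
        if Good (fun a => collapse (g a)) then
          ∏ a, w (fun a => collapse (g a)) a (g a) else 0 := by
      rw [Finset.mul_sum]
      refine Finset.sum_congr rfl fun g _ => ?_
      simp only [Φ, Good, w]
      rw [hfor, hres _ _ (by simp), Fintype.prod_option, Finset.prod_ite_zero]
      by_cases hg : g (ρ (fun a => collapse (g a)) j) = none
      · simp only [hg, and_true, mul_ite, mul_zero]
        simp [c, hg]
      · simp [hg]
    rw [hsum, hcol, mul_assoc, hfs, Finset.sum_mul, Finset.mul_sum univ _ t]
    refine congrArg (x (some j) * ·) ?_
    refine Finset.sum_congr rfl fun F _ => ?_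
    by_cases hF : Good F
    · obtain ⟨r1, -⟩ := hρ F hF.1
      rw [if_pos hF, if_pos hF, ← Finset.mul_prod_erase univ _ (mem_univ (ρ F j)),
        ← Finset.mul_prod_erase univ (fun a => (F a).elim (t + x none) fun a => x (some a))
          (mem_univ (ρ F j)), r1 j]
      have : ∏ a ∈ univ.erase (ρ F j),
            (F a).elim (w F a none + w F a (some none)) (fun b => w F a (some (some b))) =
          ∏ a ∈ univ.erase (ρ F j), (F a).elim (t + x none) fun a => x (some a) := by
        refine Finset.prod_congr rfl fun a ha => ?_
        have ha' := Finset.ne_of_mem_erase ha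
        cases F a <;> simp [w, ha']
      rw [this]
      simp [w]
      ring
    · rw [if_neg hF, if_neg hF]; ring
  rw [hsplit, Fintype.sum_option, Fintype.sum_option, hnone,
    Finset.sum_eq_zero (fun g _ => hself g), zero_add, add_mul, Finset.sum_mul,
    Finset.sum_congr rfl fun j _ => hsome j, ← Finset.sum_mul]
  ring

end forests

/-! ### Spanning trees of a cone -/

section trees

variable {V : Type*}

/-- The graph on `Option V` joining each `a : V` to its parent `F a`, where `none` is an added
apex serving as the parent of all roots. -/
def parentGraph (F : V → Option V) : SimpleGraph (Option V) :=
  SimpleGraph.fromRel fun p q => ∃ a, p = some a ∧ F a = q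

theorem IsForest.ne_some {F : V → Option V} (hF : IsForest F) (a : V) : F a ≠ some a := by
  obtain ⟨h, hh⟩ := hF
  exact fun e => lt_irrefl _ (hh a a e)

theorem IsForest.parentGraph_adj {F : V → Option V} (hF : IsForest F) (p q : Option V) :
    (parentGraph F).Adj p q ↔ (∃ a, p = some a ∧ F a = q) ∨ ∃ a, q = some a ∧ F a = p := by
  rw [parentGraph, SimpleGraph.fromRel_adj]
  refine and_iff_right_of_imp ?_
  rintro (⟨a, rfl, ha⟩ | ⟨a, rfl, ha⟩) rfl <;> exact hF.ne_some _ ha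

theorem IsForest.not_swap {F : V → Option V} (hF : IsForest F) {a b : V} (hab : F a = some b) :
    F b ≠ some a := by
  obtain ⟨h, hh⟩ := hF
  exact fun e => lt_asymm (hh _ _ hab) (hh _ _ e)

theorem IsForest.isTree_parentGraph [Finite V] {F : V → Option V} (hF : IsForest F) :
    (parentGraph F).IsTree := by
  rw [SimpleGraph.isTree_iff_connected_and_card]
  constructor
  · have hreach : ∀ p, (parentGraph F).Reachable p none := by
      obtain ⟨h, hh⟩ := id hF
      have : ∀ k a, h a < k → (parentGraph F).Reachable (some a) none := by
        intro k
        induction k with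
        | zero => intro a ha; omega
        | succ k ih =>
          intro a ha
          have hadj : (parentGraph F).Adj (some a) (F a) :=
            (hF.parentGraph_adj _ _).2 (.inl ⟨a, rfl, rfl⟩)
          cases hFa : F a with
          | none => exact (hFa ▸ hadj).reachable
          | some b =>
            have := hh _ _ hFa
            exact (hFa ▸ hadj).reachable.trans (ih b (by omega))
      rintro (_ | a)
      · exact .rfl
      · exact this _ a (Nat.lt_succ_self _)
    exact ⟨fun p q => (hreach p).trans (hreach q).symm⟩
  · have hedge : (parentGraph F).edgeSet = Set.range fun a => s(some a, F a) := by
      ext e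
      induction e with
      | h p q =>
        rw [SimpleGraph.mem_edgeSet, hF.parentGraph_adj]
        simp only [Set.mem_range, Sym2.eq_iff]
        constructor
        · rintro (⟨a, rfl, ha⟩ | ⟨a, rfl, ha⟩)
          · exact ⟨a, .inl ⟨rfl, ha⟩⟩
          · exact ⟨a, .inr ⟨rfl, ha⟩⟩
        · rintro ⟨a, ⟨rfl, ha⟩ | ⟨rfl, ha⟩⟩
          · exact .inl ⟨a, rfl, ha⟩
          · exact .inr ⟨a, rfl, ha⟩
    have hinj : Function.Injective fun a => s(some a, F a) := by
      intro a b hab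
      rcases Sym2.eq_iff.1 hab with ⟨h, -⟩ | ⟨h1, h2⟩
      · exact Option.some.inj h
      · exact (hF.not_swap h2 h1.symm).elim
    rw [hedge, Nat.card_range_of_injective hinj, Finite.card_option]

theorem parentGraph_injOn : Set.InjOn (parentGraph (V := V)) {F | IsForest F} := by
  intro F hF F' hF' heq
  obtain ⟨h, hh⟩ := id hF
  have : ∀ k a, h a < k → F a = F' a := by
    intro k
    induction k with
    | zero => intro a ha; omega
    | succ k ih =>
      intro a ha
      have hadj : (parentGraph F).Adj (some a) (F a) :=
        (hF.parentGraph_adj _ _).2 (.inl ⟨a, rfl, rfl⟩)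
      rw [heq, hF'.parentGraph_adj] at hadj
      rcases hadj with ⟨a', ha', h'⟩ | ⟨b, hb, hb'⟩
      · rw [← Option.some.inj ha'] at h'; exact h'.symm
      · have := ih b (by have := hh _ _ hb; omega)
        exact (hF.not_swap hb (this.trans hb')).elim
  funext a
  exact this _ a (Nat.lt_succ_self _)

/-- Every tree on `Option V` comes from a forest: the parent of a vertex is a neighbour closer to
the apex. -/
theorem exists_parentGraph_eq [Finite V] {T : SimpleGraph (Option V)} (hT : T.IsTree) :
    ∃ F, IsForest F ∧ parentGraph F = T := by
  have hnext : ∀ a : V, ∃ q, T.Adj (some a) q ∧ T.dist q none < T.dist (some a) none := by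
    intro a
    obtain ⟨p, hp⟩ := hT.connected.exists_walk_length_eq_dist (some a) none
    cases p with
    | cons hadj p =>
      refine ⟨_, hadj, ?_⟩
      rw [← hp, SimpleGraph.Walk.length_cons]
      exact Nat.lt_succ_of_le (SimpleGraph.dist_le p)
  choose F hadj hdist using hnext
  have hF : IsForest F := by
    refine ⟨fun a => T.dist (some a) none, fun a b hab => ?_⟩
    have := hdist a
    rwa [hab] at this
  have hle : parentGraph F ≤ T := by
    intro p q hpq
    rcases (hF.parentGraph_adj _ _).1 hpq with ⟨a, rfl, rfl⟩ | ⟨a, rfl, rfl⟩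
    · exact hadj a
    · exact (hadj a).symm
  exact ⟨F, hF, le_antisymm hle ((SimpleGraph.isTree_iff_minimal_connected.1 hT).2
    hF.isTree_parentGraph.connected hle)⟩

/-- The neighbours of `p` are its parent (if `p` is not the apex) and its children. -/
theorem IsForest.card_neighborSet [Fintype V] [DecidableEq V] {F : V → Option V}
    (hF : IsForest F) (p : Option V) :
    Nat.card ((parentGraph F).neighborSet p) =
      #{a | some a = p} + #{a | F a = p} := by
  have : (parentGraph F).neighborSet p =
      ↑(image F {a | some a = p} ∪ image some {a | F a = p} : Finset (Option V)) := by
    ext q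
    rw [SimpleGraph.mem_neighborSet, hF.parentGraph_adj]
    simp only [coe_union, coe_image, coe_filter, mem_univ, true_and, Set.mem_union, Set.mem_image,
      Set.mem_ofPred_eq]
    constructor
    · rintro (⟨a, rfl, h⟩ | ⟨a, rfl, h⟩)
      · exact .inl ⟨a, rfl, h⟩
      · exact .inr ⟨a, h, rfl⟩
    · rintro (⟨a, rfl, h⟩ | ⟨a, h, rfl⟩)
      · exact .inl ⟨a, rfl, h⟩
      · exact .inr ⟨a, rfl, h⟩
  rw [this, Nat.card_coe_set_eq, Set.ncard_coe_finset, card_union_of_disjoint,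
    card_image_of_injOn, card_image_of_injective _ (Option.some_injective V)]
  · intro a ha b hb _
    simp only [coe_filter, mem_univ, true_and, Set.mem_ofPred_eq] at ha hb
    exact Option.some.inj (ha.trans hb.symm)
  · rw [Finset.disjoint_left]
    simp only [mem_image, mem_filter, mem_univ, true_and]
    rintro q ⟨a, rfl, rfl⟩ ⟨b, hb, hb'⟩
    exact hF.not_swap hb'.symm hb

theorem IsForest.prod_degree [Fintype V] [DecidableEq V] {R : Type*} [CommRing R]
    {F : V → Option V} (hF : IsForest F) (y : Option V → R) :
    ∏ p, y p ^ Nat.card ((parentGraph F).neighborSet p) =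
      (∏ a, y (some a)) * ∏ a, y (F a) := by
  simp only [hF.card_neighborSet, pow_add, prod_mul_distrib]
  congr 1
  · rw [← Finset.prod_fiberwise' univ (fun a : V => some a) y]
    simp
  · rw [← Finset.prod_fiberwise' univ F y]
    simp

/-- The degree enumerator of the spanning trees of a cone with apex `none`, in terms of the forest
enumerator of its base. -/
theorem sum_spanningTrees_cone [Fintype V] [DecidableEq V] {R : Type*} [CommRing R]
    (G : SimpleGraph (Option V)) (hG : ∀ a, G.Adj (some a) none) (y : Option V → R) :
    (∑ᶠ T ∈ spanningTrees G, ∏ p, y p ^ Nat.card (T.neighborSet p)) =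
      (∏ a, y (some a)) *
        forestSum (fun a b => G.Adj (some a) (some b)) (fun a => y (some a)) (y none) := by
  classical
  have himg : spanningTrees G = parentGraph ''
      {F | IsForest F ∧ Respects (fun a b => G.Adj (some a) (some b)) F} := by
    ext T
    constructor
    · rintro ⟨hle, hT⟩
      obtain ⟨F, hF, rfl⟩ := exists_parentGraph_eq hT
      refine ⟨F, ⟨hF, fun a b hab => hle ?_⟩, rfl⟩
      exact (hF.parentGraph_adj _ _).2 (.inl ⟨a, rfl, hab⟩)
    · rintro ⟨F, ⟨hF, hR⟩, rfl⟩
      have : ∀ a, G.Adj (some a) (F a) := by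
        intro a
        cases hFa : F a with
        | none => exact hG a
        | some b => exact hR a b hFa
      refine ⟨fun p q hpq => ?_, hF.isTree_parentGraph⟩
      rcases (hF.parentGraph_adj _ _).1 hpq with ⟨a, rfl, rfl⟩ | ⟨a, rfl, rfl⟩
      · exact this a
      · exact (this a).symm
  have hset : {F | IsForest F ∧ Respects (fun a b => G.Adj (some a) (some b)) F} =
      ↑(univ.filter fun F : V → Option V =>
        IsForest F ∧ Respects (fun a b => G.Adj (some a) (some b)) F) := by
    ext F; simp
  rw [himg, finsum_mem_image (parentGraph_injOn.mono fun F hF => hF.1), hset,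
    finsum_mem_coe_finset, forestSum, Finset.mul_sum, Finset.sum_filter]
  refine Finset.sum_congr rfl fun F _ => ?_
  by_cases hF : IsForest F ∧ Respects (fun a b => G.Adj (some a) (some b)) F
  · rw [if_pos hF, if_pos hF, hF.1.prod_degree]
    congr 1
    refine Finset.prod_congr rfl fun a _ => ?_
    cases F a <;> rfl
  · rw [if_neg hF, if_neg hF, mul_zero]

theorem sum_spanningTrees_equiv {U W : Type*} [Fintype U] [Fintype W] {R : Type*} [CommRing R]
    (e : W ≃ U) (G : SimpleGraph U) (y : U → R) :
    (∑ᶠ T ∈ spanningTrees G, ∏ p, y p ^ Nat.card (T.neighborSet p)) =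
      ∑ᶠ T ∈ spanningTrees (G.comap e), ∏ p, y (e p) ^ Nat.card (T.neighborSet p) := by
  refine finsum_mem_eq_of_bijOn (SimpleGraph.comap e) ⟨?_, ?_, ?_⟩ ?_
  · rintro T ⟨hle, hT⟩
    exact ⟨fun _ _ huv => hle huv, (SimpleGraph.Iso.comap e T).isTree_iff.2 hT⟩
  · intro T _ T' _ h
    ext u v
    have := congrArg (fun H : SimpleGraph W => H.Adj (e.symm u) (e.symm v)) h
    simpa using this
  · rintro T ⟨hle, hT⟩
    refine ⟨T.comap e.symm, ⟨fun u v huv => ?_, (SimpleGraph.Iso.comap e.symm T).isTree_iff.2 hT⟩,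
      ?_⟩
    · have := hle huv
      simpa using this
    · ext u v; simp
  · intro T _
    symm
    refine Fintype.prod_equiv e _ _ fun p => ?_
    congr 1
    exact Nat.card_congr ((SimpleGraph.Iso.comap e T).mapNeighborSet p)

end trees

/-! ### Threshold graphs -/

section threshold

/-- `j` is among the `lam i` smallest elements of `Fin m` other than `i`. -/
def thresholdAdj {m : ℕ} (lam : Fin m → ℕ) (i j : Fin m) : Prop :=
  j ≠ i ∧ (if (j : ℕ) < (i : ℕ) then (j : ℕ) + 1 else (j : ℕ)) ≤ lam i

/-- `lam` is the weakly decreasing degree sequence of the threshold graph with adjacency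
`thresholdAdj lam`; the bound `lam i < m` makes `lam i` the actual degree of `i`. -/
structure IsThresholdSeq {m : ℕ} (lam : Fin m → ℕ) : Prop where
  lt : ∀ i, lam i < m
  anti : ∀ i j, i ≤ j → lam j ≤ lam i
  symm : ∀ i j, thresholdAdj lam i j → thresholdAdj lam j i

/-- When the first vertex is dominating, deleting it lowers every other degree by one. -/
theorem thresholdAdj_succ {m : ℕ} {lam : Fin (m + 1) → ℕ} (hpos : ∀ i, 0 < lam i) (i j : Fin m) :
    thresholdAdj (fun i : Fin m => lam i.succ - 1) i j ↔ thresholdAdj lam i.succ j.succ := by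
  have := hpos i.succ
  simp only [thresholdAdj, Fin.val_succ, ne_eq, Fin.succ_inj]
  refine and_congr Iff.rfl ?_
  split_ifs <;> omega

namespace IsThresholdSeq

variable {m : ℕ} {lam : Fin (m + 1) → ℕ}

theorem adj_zero (hpos : ∀ i, 0 < lam i) (i : Fin m) : thresholdAdj lam i.succ 0 := by
  refine ⟨(Fin.succ_ne_zero i).symm, ?_⟩
  have := hpos i.succ
  simp
  omega

theorem lam_zero (h : IsThresholdSeq lam) (hpos : ∀ i, 0 < lam i) : lam 0 = m := by
  have hlt := h.lt 0
  cases m with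
  | zero => omega
  | succ m =>
    have := (h.symm _ _ (adj_zero hpos (Fin.last m))).2
    simp at this
    omega

theorem succ (h : IsThresholdSeq lam) (hpos : ∀ i, 0 < lam i) :
    IsThresholdSeq fun i : Fin m => lam i.succ - 1 where
  lt i := by
    have := h.lt i.succ
    have := hpos i.succ
    omega
  anti i j hij := Nat.sub_le_sub_right (h.anti _ _ (Fin.succ_le_succ_iff.2 hij)) 1
  symm i j hij := by
    rw [thresholdAdj_succ hpos] at hij ⊢
    exact h.symm _ _ hij

end IsThresholdSeq

/-- The forest enumerator of a threshold graph.  The homomorphism `φ`, positive on `t` and on the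
`x i`, only serves to guarantee that the elements `t + x 0` cancelled in the recursion are
nonzero. -/
theorem forestSum_threshold {R : Type*} [CommRing R] [IsDomain R] (φ : R →+* ℤ) (m : ℕ) :
    ∀ (lam : Fin (m + 1) → ℕ), IsThresholdSeq lam → ∀ (x : Fin (m + 1) → R) (t : R),
      (∀ i, 0 < φ (x i)) → 0 < φ t →
      forestSum (thresholdAdj lam) x t =
        t * ∏ r ∈ range m, (t + ∑ i, if r + 1 ≤ lam i then x i else 0) := by
  induction m with
  | zero =>
    intro lam h x t _ _
    rw [forestSum_equiv (finSuccEquivLast (n := 0)).symm, forestSum_isolated]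
    · simp [forestSum, IsForest, Respects]
    · rintro (_ | p) hp
      · exact hp.1 rfl
      · exact p.elim0
    · rintro (_ | p) hp
      · exact hp.1 rfl
      · exact p.elim0
  | succ m ih =>
    intro lam h x t hx ht
    rcases Nat.eq_zero_or_pos (lam (Fin.last (m + 1))) with h0 | h0
    · have hB : ∀ p, ¬ thresholdAdj lam (Fin.last (m + 1)) p := by
        rintro p ⟨hp, hle⟩
        have : (p : ℕ) < m + 1 := Fin.val_lt_last hp
        rw [h0] at hle
        simp [this] at hle
      have hB' : ∀ p, ¬ thresholdAdj lam p (Fin.last (m + 1)) := fun p hp => hB p (h.symm _ _ hp)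
      have hlt : ∀ i : Fin (m + 1), lam i.castSucc < m + 1 := by
        intro i
        by_contra hcon
        refine hB' i.castSucc ⟨(Fin.castSucc_lt_last i).ne', ?_⟩
        have := i.2
        rw [if_neg] <;> simp <;> omega
      have hadj : ∀ i j, thresholdAdj lam (Fin.castSucc i) (Fin.castSucc j) ↔
          thresholdAdj (fun i : Fin (m + 1) => lam i.castSucc) i j := by
        intro i j
        simp [thresholdAdj]
      have h' : IsThresholdSeq fun i : Fin (m + 1) => lam i.castSucc :=
        ⟨hlt, fun i j hij => h.anti _ _ (Fin.castSucc_le_castSucc_iff.2 hij), fun i j hij => by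
          rw [← hadj] at hij ⊢
          exact h.symm _ _ hij⟩
      rw [forestSum_equiv (finSuccEquivLast (n := m + 1)).symm, forestSum_isolated]
      · simp only [finSuccEquivLast_symm_some, hadj]
        rw [ih _ h' _ t (fun i => hx _) ht, Finset.prod_range_succ]
        have hlast : ∑ i, (if m + 1 ≤ lam i then x i else 0) = 0 := by
          refine Finset.sum_eq_zero fun i _ => if_neg ?_
          refine Fin.lastCases ?_ (fun i => ?_) i
          · omega
          · have := hlt i
            omega
        have hfac : ∀ r, ∑ i, (if r + 1 ≤ lam i then x i else 0) =
            ∑ i : Fin (m + 1), if r + 1 ≤ lam i.castSucc then x i.castSucc else 0 := by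
          intro r
          rw [Fin.sum_univ_castSucc, h0]
          simp
        rw [hlast]
        simp only [hfac]
        ring
      · intro p hp
        rw [finSuccEquivLast_symm_none] at hp
        exact hB _ hp
      · intro p hp
        rw [finSuccEquivLast_symm_none] at hp
        exact hB' _ hp
    · have hpos : ∀ i, 0 < lam i := fun i => h0.trans_le (h.anti _ _ (Fin.le_last i))
      have hne : t + x 0 ≠ 0 := by
        intro h
        have := congrArg φ h
        rw [map_add, map_zero] at this
        have := hx 0
        omega
      have hcone := forestSum_cone
        (fun a b => thresholdAdj lam ((_root_.finSuccEquiv (m + 1)).symm a) ((_root_.finSuccEquiv (m + 1)).symm b))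
        (fun a => h.symm _ _ (by simpa using IsThresholdSeq.adj_zero hpos a))
        (fun a => by simpa using IsThresholdSeq.adj_zero hpos a)
        (fun a => x ((_root_.finSuccEquiv (m + 1)).symm a)) t
      simp only [_root_.finSuccEquiv_symm_none, _root_.finSuccEquiv_symm_some, ← thresholdAdj_succ hpos] at hcone
      rw [forestSum_equiv (_root_.finSuccEquiv (m + 1)).symm]
      refine mul_right_cancel₀ hne ?_
      rw [hcone, ih _ (h.succ hpos) _ (t + x 0) (fun i => hx _)
        (by rw [map_add]; exact add_pos ht (hx 0)), Finset.prod_range_succ']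
      have hfirst : ∑ i, (if 0 + 1 ≤ lam i then x i else 0) = x 0 + ∑ i : Fin (m + 1), x i.succ := by
        rw [← Fin.sum_univ_succ]
        exact Finset.sum_congr rfl fun i _ => if_pos (hpos i)
      have hfac : ∏ r ∈ range m, (t + ∑ i, if r + 1 + 1 ≤ lam i then x i else 0) =
          ∏ r ∈ range m, (t + x 0 +
            ∑ i : Fin (m + 1), if r + 1 ≤ lam i.succ - 1 then x i.succ else 0) := by
        refine Finset.prod_congr rfl fun r hr => ?_
        rw [Finset.mem_range] at hr
        rw [Fin.sum_univ_succ, h.lam_zero hpos, if_pos (by omega), ← add_assoc]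
        congr 1
        refine Finset.sum_congr rfl fun i _ => ?_
        have := hpos i.succ
        exact if_congr (by omega) rfl rfl
      rw [hfirst, hfac]
      ring

end threshold
end ThresholdTrees

/-- Theorem: degree-weighted spanning tree enumerator of a connected threshold graph.
Vertices are `Fin n`, thought of as `{1,…,n}` via `i ↦ i + 1`; `x_k = X k` for
`1 ≤ k ≤ n`.  `lam` is the (weakly decreasing) degree sequence and `conj` its
conjugate partition. -/
theorem threshold_degree_enumerator (n : ℕ) (hn : 2 ≤ n)
    (G : SimpleGraph (Fin n)) (hconn : G.Connected)
    (lam : Fin n → ℕ)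
    (hdeg : ∀ i, lam i = Nat.card (G.neighborSet i))
    (hanti : ∀ i j : Fin n, i ≤ j → lam j ≤ lam i)
    (hthr : ∀ i j : Fin n, G.Adj i j ↔
      j ≠ i ∧ (if (j : ℕ) < (i : ℕ) then (j : ℕ) + 1 else (j : ℕ)) ≤ lam i)
    (conj : ℕ → ℕ)
    (hconj : ∀ r, conj r = ((univ : Finset (Fin n)).filter fun i => r ≤ lam i).card) :
    (∑ᶠ T ∈ spanningTrees G,
        ∏ i : Fin n,
          (X ((i : ℕ) + 1) : MvPolynomial ℕ ℤ) ^ Nat.card (T.neighborSet i))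
      = (∏ i : Fin n, (X ((i : ℕ) + 1) : MvPolynomial ℕ ℤ)) *
          ∏ r ∈ Finset.Icc 2 (n - 1), ∑ i ∈ Finset.Icc 1 (conj r), X i := by
  classical
  obtain ⟨m, rfl⟩ : ∃ m, n = m + 2 := ⟨n - 2, by omega⟩
  have hadj : ∀ i j, G.Adj i j ↔ ThresholdTrees.thresholdAdj lam i j := hthr
  have hseq : ThresholdTrees.IsThresholdSeq lam := by
    refine ⟨fun i => ?_, hanti, fun i j hij => ?_⟩
    · rw [hdeg i, Nat.card_eq_fintype_card, SimpleGraph.card_neighborSet_eq_degree]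
      simpa using G.degree_lt_card_verts i
    · rw [← hadj] at hij ⊢
      exact hij.symm
  have hpos : ∀ i, 0 < lam i := by
    intro i
    rw [hdeg i, Nat.card_eq_fintype_card, SimpleGraph.card_neighborSet_eq_degree]
    exact hconn.preconnected.degree_pos_of_nontrivial i
  let y : Fin (m + 2) → MvPolynomial ℕ ℤ := fun i => X ((i : ℕ) + 1)
  have hy : ∀ i, 0 < MvPolynomial.eval (fun _ => (1 : ℤ)) (y i) := by
    intro i
    simp [y]
  -- Since `lam` is antitone, the indices with `r ≤ lam i` are the first `conj r` ones.
  have hconj' : ∀ r, ∑ i ∈ Finset.Icc 1 (conj r), (X i : MvPolynomial ℕ ℤ) =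
      ∑ i, if r ≤ lam i then y i else 0 := by
    intro r
    have hiff : ∀ i : Fin (m + 2), r ≤ lam i ↔ (i : ℕ) < conj r := by
      intro i
      rw [hconj r]
      constructor
      · intro hi
        have : Finset.Iic i ⊆ univ.filter fun i => r ≤ lam i := fun j hj =>
          Finset.mem_filter.2 ⟨mem_univ _, hi.trans (hanti _ _ (Finset.mem_Iic.1 hj))⟩
        have := Finset.card_le_card this
        rw [Fin.card_Iic] at this
        omega
      · intro hi
        by_contra hcon
        have : (univ.filter fun i => r ≤ lam i) ⊆ Finset.Iio i := fun j hj =>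
          Finset.mem_Iio.2 (lt_of_not_ge fun hij =>
            hcon ((Finset.mem_filter.1 hj).2.trans (hanti _ _ hij)))
        have := Finset.card_le_card this
        rw [Fin.card_Iio] at this
        omega
    have hle : conj r ≤ m + 2 := by
      rw [hconj r]
      exact (Finset.card_le_univ _).trans_eq (Fintype.card_fin _)
    simp only [hiff, y]
    rw [Fin.sum_univ_eq_sum_range
      (fun k => if k < conj r then (X (k + 1) : MvPolynomial ℕ ℤ) else 0) (m + 2),
      ← Finset.sum_filter]
    have h1 : Finset.Icc 1 (conj r) = Finset.Ico (0 + 1) (conj r + 1) := by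
      ext; simp
    have h2 : (range (m + 2)).filter (fun k => k < conj r) = Finset.Ico 0 (conj r) := by
      ext; simp; omega
    rw [h1, h2, Finset.sum_Ico_add' (fun k => (X k : MvPolynomial ℕ ℤ))]
  change (∑ᶠ T ∈ spanningTrees G, ∏ i, y i ^ Nat.card (T.neighborSet i)) = (∏ i, y i) * _
  rw [ThresholdTrees.sum_spanningTrees_equiv (_root_.finSuccEquiv (m + 1)).symm,
    ThresholdTrees.sum_spanningTrees_cone]
  · simp only [SimpleGraph.comap_adj, _root_.finSuccEquiv_symm_none, _root_.finSuccEquiv_symm_some, hadj,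
      ← ThresholdTrees.thresholdAdj_succ hpos]
    rw [ThresholdTrees.forestSum_threshold (MvPolynomial.eval fun _ => (1 : ℤ)) m _
      (hseq.succ hpos) _ _ (fun i => hy _) (hy 0), Fin.prod_univ_succ y]
    have hprod : ∏ r ∈ Finset.Icc 2 (m + 2 - 1), ∑ i ∈ Finset.Icc 1 (conj r),
          (X i : MvPolynomial ℕ ℤ) =
        ∏ r ∈ range m, (y 0 +
          ∑ i : Fin (m + 1), if r + 1 ≤ lam i.succ - 1 then y i.succ else 0) := by
      have : Finset.Icc 2 (m + 2 - 1) = Finset.Ico (0 + 2) (m + 2) := by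
        ext; simp; omega
      rw [this, ← Finset.prod_Ico_add', ← Finset.range_eq_Ico]
      refine Finset.prod_congr rfl fun r hr => ?_
      rw [Finset.mem_range] at hr
      rw [hconj', Fin.sum_univ_succ, hseq.lam_zero hpos, if_pos (by omega)]
      congr 1
      refine Finset.sum_congr rfl fun i _ => ?_
      have := hpos i.succ
      exact if_congr (by omega) rfl rfl
    rw [hprod]
    ring
  · intro a
    simp only [SimpleGraph.comap_adj, _root_.finSuccEquiv_symm_none, _root_.finSuccEquiv_symm_some, hadj]
    exact ThresholdTrees.IsThresholdSeq.adj_zero hpos a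
end

section
/- Let R be a Noetherian commutative integral domain and let f ∈ R be a prime element, so that R/(f) is an integral domain; let K be the field of fractions of R/(f). Let A be an n×n matrix over R, and suppose that the kernel of the reduction of A modulo (f), regarded as a K-linear map K^n → K^n, has dimension at least d. Then f^d divides det A in R. -/
/-!
Extend `d` independent kernel vectors to a basis of `K ^ n`, where `K = Frac (R ⧸ (f))`. After
clearing denominators the basis vectors become the columns of a matrix over `R ⧸ (f)`, which lifts
to a matrix `P` over `R`. Since its reduction is invertible over `K`, `f ∤ det P`. At least `d`
columns of `A * P` are divisible by `f`, so `f ^ d ∣ det A * det P`; as `f` is prime and does not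
divide `det P`, `f ^ d ∣ det A`.
-/

/-- Pulling `f` out of the columns indexed by `S` contributes `f ^ #S` to the determinant. -/
lemma pow_card_dvd_det_of_dvd_columns {R : Type*} [CommRing R] {n : Type*} [Fintype n]
    [DecidableEq n] (f : R) (B : Matrix n n R) (S : Finset n) (hB : ∀ j ∈ S, ∀ i, f ∣ B i j) :
    f ^ S.card ∣ B.det := by
  have hQ : ∀ i j, ∃ q, B i j = q * (if j ∈ S then f else 1) := by
    intro i j
    split_ifs with hj
    · obtain ⟨q, hq⟩ := hB j hj i
      exact ⟨q, by rw [hq, mul_comm]⟩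
    · exact ⟨B i j, by simp⟩
  choose Q hQ using hQ
  have hBQ : B = Matrix.of Q * Matrix.diagonal (fun j => if j ∈ S then f else 1) := by
    ext i j
    rw [Matrix.mul_diagonal, hQ i j, Matrix.of_apply]
  rw [hBQ, Matrix.det_mul, Matrix.det_diagonal]
  refine Dvd.dvd.mul_left ?_ _
  simp [Finset.prod_ite_mem]

/-- A `d`-dimensional part of the kernel of a square matrix over a field fills `d` columns of
some invertible matrix. -/
lemma exists_det_ne_zero_with_kernel_columns {K : Type*} [Field K] {n : ℕ} (d : ℕ)
    (M : Matrix (Fin n) (Fin n) K)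
    (h : (d : Cardinal) ≤ Module.rank K (LinearMap.ker M.mulVecLin)) :
    ∃ (P : Matrix (Fin n) (Fin n) K) (S : Finset (Fin n)), P.det ≠ 0 ∧ S.card = d ∧
      ∀ j ∈ S, ∀ i, (M * P) i j = 0 := by
  obtain ⟨v, hv⟩ := Module.le_rank_iff.mp h
  have hw : LinearIndependent K (fun i => (v i : Fin n → K)) :=
    hv.map' (LinearMap.ker M.mulVecLin).subtype (Submodule.ker_subtype _)
  let b := Module.Basis.extend hw.linearIndepOn_id
  let e := b.indexEquiv (Pi.basisFun K (Fin n))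
  have hmem : ∀ i, (v i : Fin n → K) ∈ hw.linearIndepOn_id.extend (Set.subset_univ _) :=
    fun i => Module.Basis.subset_extend hw.linearIndepOn_id ⟨i, rfl⟩
  let g : Fin d → Fin n := fun i => e ⟨v i, hmem i⟩
  have hg : Function.Injective g := fun i j hij =>
    hw.injective (Subtype.mk.inj (e.injective hij))
  refine ⟨Matrix.of fun i j => b (e.symm j) i, Finset.univ.image g, ?_, ?_, ?_⟩
  · have hcols : LinearIndependent K (Matrix.of fun i j => b (e.symm j) i).col :=
      b.linearIndependent.comp e.symm e.symm.injective
    exact ((Matrix.isUnit_iff_isUnit_det _).mp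
      (Matrix.linearIndependent_cols_iff_isUnit.mp hcols)).ne_zero
  · rw [Finset.card_image_of_injective _ hg, Finset.card_univ, Fintype.card_fin]
  · intro j hj i
    obtain ⟨k, -, rfl⟩ := Finset.mem_image.mp hj
    have hb : b (e.symm (g k)) = v k := by
      simp only [g, Equiv.symm_apply_apply]
      exact Module.Basis.extend_apply_self _ _
    have hk : M.mulVec (v k) = 0 := LinearMap.mem_ker.mp (v k).2
    have hki := congrFun hk i
    rw [← hb] at hki
    exact hki

/-- Identification of factors: if the reduction of a square matrix `A` modulo a prime
element `f` of a Noetherian domain `R` has kernel of dimension at least `d` over the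
fraction field of `R/(f)`, then `f ^ d` divides `det A` in `R`. -/
theorem identification_of_factors {R : Type*} [CommRing R] [IsDomain R]
    [IsNoetherianRing R] {n : ℕ} (d : ℕ) (f : R) (hf : Prime f)
    (A : Matrix (Fin n) (Fin n) R)
    (h : (d : Cardinal) ≤
      Module.rank (FractionRing (R ⧸ Ideal.span {f}))
        (LinearMap.ker (Matrix.mulVecLin (A.map fun a =>
          algebraMap (R ⧸ Ideal.span {f}) (FractionRing (R ⧸ Ideal.span {f}))
            (Ideal.Quotient.mk (Ideal.span {f}) a))))) :
    f ^ d ∣ A.det := by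
  have hprime : (Ideal.span {f}).IsPrime := (Ideal.span_singleton_prime hf.ne_zero).mpr hf
  obtain ⟨P, S, hP, rfl, hS⟩ := exists_det_ne_zero_with_kernel_columns d _ h
  obtain ⟨c, hc⟩ := IsLocalization.exist_integer_multiples_of_finite
    (nonZeroDivisors (R ⧸ Ideal.span {f})) (fun ij : Fin n × Fin n => P ij.1 ij.2)
  choose q hq using hc
  choose p hp using fun ij => Ideal.Quotient.mk_surjective (q ij)
  let φ : R →+* FractionRing (R ⧸ Ideal.span {f}) :=
    (algebraMap (R ⧸ Ideal.span {f}) _).comp (Ideal.Quotient.mk (Ideal.span {f}))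
  have hφ : ∀ a, φ a = 0 ↔ f ∣ a := fun a => by
    simp only [φ, RingHom.comp_apply]
    rw [FaithfulSMul.algebraMap_eq_zero_iff, Ideal.Quotient.eq_zero_iff_mem,
      Ideal.mem_span_singleton]
  let Q : Matrix (Fin n) (Fin n) R := Matrix.of fun i j => p (i, j)
  have hQ : φ.mapMatrix Q = (c : R ⧸ Ideal.span {f}) • P := by
    ext i j
    simp only [φ, Q, RingHom.mapMatrix_apply, Matrix.map_apply, Matrix.of_apply,
      RingHom.comp_apply, Matrix.smul_apply, hp, hq]
  have hdetQ : ¬ f ∣ Q.det := by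
    rw [← hφ, RingHom.map_det, hQ, ← algebraMap_smul (FractionRing (R ⧸ Ideal.span {f})),
      Matrix.det_smul]
    refine mul_ne_zero (pow_ne_zero _ ?_) hP
    rw [Ne, FaithfulSMul.algebraMap_eq_zero_iff]
    exact nonZeroDivisors.coe_ne_zero c
  refine hf.pow_dvd_of_dvd_mul_right _ hdetQ ?_
  rw [← Matrix.det_mul]
  refine pow_card_dvd_det_of_dvd_columns f _ S fun j hj i => ?_
  have hAQ : φ.mapMatrix (A * Q) = (c : R ⧸ Ideal.span {f}) • (φ.mapMatrix A * P) := by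
    rw [map_mul, hQ, Matrix.mul_smul]
  have hij := congrFun (congrFun hAQ i) j
  rw [Matrix.smul_apply, show (φ.mapMatrix A * P) i j = 0 from hS j hj i, smul_zero] at hij
  exact (hφ _).mp hij
end

section
/- Let S be a commutative local ring with maximal ideal m and residue field K = S/m. Let A be an n×n matrix over S, and suppose that the kernel of the reduction of A modulo m, regarded as a K-linear map K^n → K^n, has dimension at least d. Then det A ∈ m^d. -/
/-!
Choose `d` linearly independent vectors in the kernel of the reduction of `A` and extend them to a
basis of `K ^ n`. Lifting the basis entrywise to `S` gives a matrix `P` whose determinant is a unit,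
since it is nonzero modulo `m`. The product `A * P` has `d` columns with all entries in `m`, so
every term of the Leibniz expansion of `det (A * P) = det A * det P` lies in `m ^ d`
(`Matrix.det_mem_pow_card_of_columns`), and hence so does `det A`.
-/

/-- Each term of the Leibniz expansion has one factor from every column. -/
theorem Matrix.det_mem_pow_card_of_columns {R m : Type*} [CommRing R] [Fintype m] [DecidableEq m]
    (I : Ideal R) (M : Matrix m m R) (s : Finset m) (hM : ∀ j ∈ s, ∀ i, M i j ∈ I) :
    M.det ∈ I ^ s.card := by
  rw [Matrix.det_apply']
  refine Ideal.sum_mem _ fun σ _ => Ideal.mul_mem_left _ _ ?_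
  rw [← Finset.prod_mul_prod_compl s]
  refine Ideal.mul_mem_right _ _ ?_
  rw [← Finset.prod_const]
  exact Ideal.prod_mem_prod fun j hj => hM j hj _

/-- A subspace of `K ^ n` of dimension at least `d` contains `d` columns of some invertible matrix,
namely one whose columns form a basis of `K ^ n` extending `d` independent vectors of `W`. -/
theorem exists_isUnit_det_of_le_rank {K : Type*} [Field K] {n d : ℕ}
    (W : Submodule K (Fin n → K)) (h : (d : Cardinal) ≤ Module.rank K W) :
    ∃ (Q : Matrix (Fin n) (Fin n) K) (s : Finset (Fin n)),
      IsUnit Q.det ∧ s.card = d ∧ ∀ j ∈ s, Q.col j ∈ W := by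
  obtain ⟨t, ht, hli⟩ := le_rank_iff_exists_linearIndependent_finset.1 h
  have hli' := hli.map' W.subtype W.ker_subtype
  let b₀ := Module.Basis.sumExtend hli'
  let e := b₀.indexEquiv (Pi.basisFun K (Fin n))
  refine ⟨(Pi.basisFun K (Fin n)).toMatrix (b₀.reindex e),
    Finset.univ.map (Function.Embedding.inl.trans e.toEmbedding), ?_, ?_, ?_⟩
  · rw [← Module.Basis.det_apply]
    exact (Pi.basisFun K (Fin n)).isUnit_det _
  · simpa using ht
  · intro j hj
    obtain ⟨i, -, rfl⟩ := Finset.mem_map.1 hj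
    have hb : b₀ (Sum.inl i) = ((i : W) : Fin n → K) := by
      simp only [b₀, Module.Basis.sumExtend]
      rw [Module.Basis.reindex_apply, Module.Basis.extend_apply_self]
      rfl
    have hcol : b₀.reindex e (e (Sum.inl i)) = ((i : W) : Fin n → K) := by
      rw [Module.Basis.reindex_apply, e.symm_apply_apply, hb]
    have hmem : b₀.reindex e (e (Sum.inl i)) ∈ W := hcol ▸ (i : W).2
    exact hmem

/-- If the reduction of a square matrix `A` over a local ring `S` modulo the maximal
ideal `m` has kernel of dimension at least `d` over the residue field, then
`det A ∈ m ^ d`. -/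
theorem det_mem_maximalIdeal_pow {S : Type*} [CommRing S] [IsLocalRing S]
    {n : ℕ} (d : ℕ) (A : Matrix (Fin n) (Fin n) S)
    (h : (d : Cardinal) ≤
      Module.rank (IsLocalRing.ResidueField S)
        (LinearMap.ker (Matrix.mulVecLin (A.map (IsLocalRing.residue S))))) :
    A.det ∈ IsLocalRing.maximalIdeal S ^ d := by
  obtain ⟨Q, s, hQ, rfl, hs⟩ := exists_isUnit_det_of_le_rank _ h
  choose lift hlift using IsLocalRing.residue_surjective (R := S)
  let P : Matrix (Fin n) (Fin n) S := Q.map lift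
  have hP : P.map (IsLocalRing.residue S) = Q := by
    ext i j
    exact hlift _
  have hdet : IsUnit P.det := by
    refine isUnit_of_map_unit (IsLocalRing.residue S) _ ?_
    rw [RingHom.map_det, RingHom.mapMatrix_apply, hP]
    exact hQ
  have hAP : (A * P).det ∈ IsLocalRing.maximalIdeal S ^ s.card := by
    refine Matrix.det_mem_pow_card_of_columns _ _ s fun j hj i => ?_
    rw [← IsLocalRing.residue_eq_zero_iff]
    have := congrFun (LinearMap.mem_ker.1 (hs j hj)) i
    simpa [Matrix.mul_apply, Matrix.mulVec, dotProduct, P, hlift] using this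
  rw [Matrix.det_mul] at hAP
  exact (Ideal.mul_unit_mem_iff_mem _ hdet).1 hAP
end

section
/- Let G be a finite simple graph on n vertices, and suppose the characteristic polynomial of its Laplacian matrix L(G) factors over ℝ as ∏_{i=1}^n (t − λ_i) with λ_n = 0. Then n times the number of spanning trees of G equals λ_1 λ_2 ⋯ λ_{n−1}. -/
/-!
The coefficient of `t` in `∏ (t - λ_i)` is `(-1) ^ (n - 1)` times the product of the `λ_i` with
`i ≠ n`, since `λ_n = 0`. It therefore suffices to show that the coefficient of `t` in the
characteristic polynomial of `L(G)` is `(-1) ^ (n - 1) * n * τ(G)`, where `τ(G)` is the number of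
spanning trees; this is done over `ℤ` (`charpoly_coeff`).

Up to that sign, the coefficient is the sum of the principal `(n - 1)`-minors of `L(G) = N Nᵀ`,
where `N` is an oriented incidence matrix. The Weinstein–Aronszajn identity
`det (1 + X A B) = det (1 + X B A)` shows that `A B` and `B A` have the same sum of principal
`k`-minors (`sum_principal_minors_mul_comm`), which replaces the Cauchy–Binet formula: the
coefficient is the sum of the minors `det (N_Sᵀ N_S)` over the sets `S` of `n - 1` edges. The same
identity applied to a single `N_S` turns this minor into `∑ r, (det N_{S,r}) ^ 2`, where the square
matrix `N_{S,r}` arises from `N_S` by deleting the row `r`.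

If `S` is connected, every `e_v - e_r` is an integral combination of columns of `N_S` (add up the
edges of a walk from `r` to `v`), so `N_{S,r}` is invertible over `ℤ` and its determinant is `±1`.
If `S` is not connected, the indicator of the vertices not reachable from `r` is a nonzero vector
in the left kernel of `N_{S,r}`. So each minor is `n` or `0` according as `S` is connected, and the
connected sets of `n - 1` edges are precisely the spanning trees.
-/

open Finset Polynomial

open Matrix in
/-- Both sides are the coefficient of `X ^ k` in `det (1 + X A B) = det (1 + X B A)`. -/
lemma sum_principal_minors_mul_comm {R m n : Type*} [CommRing R] [Fintype m] [DecidableEq m]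
    [Fintype n] [DecidableEq n] (A : Matrix m n R) (B : Matrix n m R) (k : ℕ) :
    ∑ s ∈ (univ : Finset m).powersetCard k,
        ((A * B).submatrix (Subtype.val : s → m) (Subtype.val : s → m)).det =
      ∑ s ∈ (univ : Finset n).powersetCard k,
        ((B * A).submatrix (Subtype.val : s → n) (Subtype.val : s → n)).det := by
  rw [← coeff_det_one_add_X_smul_eq_sum_minors, ← coeff_det_one_add_X_smul_eq_sum_minors,
    Matrix.map_mul, Matrix.map_mul, ← Matrix.smul_mul, det_one_add_mul_comm, Matrix.mul_smul]

namespace MatrixTree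

variable {V : Type*} [DecidableEq V]

/-- The signed incidence of a vertex `v` with an unordered pair `e`, oriented arbitrarily by
`Quot.out`: `1` at the first end, `-1` at the second, and `0` elsewhere. It vanishes identically
on diagonal pairs. -/
noncomputable def signedInc (v : V) (e : Sym2 V) : ℤ :=
  (if v = (Quot.out e).1 then 1 else 0) - (if v = (Quot.out e).2 then 1 else 0)

/-- The orientation of `s(a, b)` is one of `(a, b)` and `(b, a)`; which one is unspecified. -/
lemma exists_signedInc_eq (a b : V) :
    (∀ v, signedInc v s(a, b) = (if v = a then 1 else 0) - (if v = b then 1 else 0)) ∨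
    (∀ v, signedInc v s(a, b) = (if v = b then 1 else 0) - (if v = a then 1 else 0)) := by
  have h : s((Quot.out s(a, b)).1, (Quot.out s(a, b)).2) = s(a, b) := Quot.out_eq s(a, b)
  rw [Sym2.eq_iff] at h
  unfold signedInc
  rcases h with ⟨h1, h2⟩ | ⟨h1, h2⟩
  · left; intro v; rw [h1, h2]
  · right; intro v; rw [h1, h2]

/-- The oriented incidence matrix of `G`. The columns are indexed by all unordered pairs, and those
of non-edges are zero. -/
noncomputable def orientedInc (G : SimpleGraph V) [DecidableRel G.Adj] : Matrix V (Sym2 V) ℤ :=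
  Matrix.of fun v e => if e ∈ G.edgeSet then signedInc v e else 0

lemma lapMatrix_eq_orientedInc_mul [Fintype V] (G : SimpleGraph V) [DecidableRel G.Adj] :
    G.lapMatrix ℤ = orientedInc G * (orientedInc G).transpose := by
  ext v w
  rw [Matrix.mul_apply]
  simp only [Matrix.transpose_apply, orientedInc, Matrix.of_apply]
  by_cases hvw : v = w
  · subst hvw
    simp only [SimpleGraph.lapMatrix, SimpleGraph.degMatrix, Matrix.sub_apply,
      Matrix.diagonal_apply_eq, SimpleGraph.adjMatrix_apply, SimpleGraph.irrefl, if_false, sub_zero]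
    rw [← SimpleGraph.sum_incMatrix_apply (R := ℤ) (G := G) (a := v)]
    refine Finset.sum_congr rfl fun e _ => ?_
    induction e with
    | h a b =>
      rw [SimpleGraph.incMatrix_apply']
      simp only [SimpleGraph.mk'_mem_incidenceSet_iff, SimpleGraph.mem_edgeSet]
      by_cases hab : G.Adj a b
      · have := hab.ne
        rcases exists_signedInc_eq a b with h | h <;> simp only [h] <;> grind
      · simp [hab]
  · simp only [SimpleGraph.lapMatrix, SimpleGraph.degMatrix, Matrix.sub_apply,
      Matrix.diagonal_apply_ne _ hvw, SimpleGraph.adjMatrix_apply]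
    rw [Finset.sum_eq_single s(v, w)]
    · rcases exists_signedInc_eq v w with h | h <;> simp only [h, SimpleGraph.mem_edgeSet] <;> grind
    · intro e _ he
      induction e with
      | h a b =>
        rw [Ne, Sym2.eq_iff] at he
        rcases exists_signedInc_eq a b with h | h <;> simp only [h] <;> grind
    · simp

/-- The oriented incidence matrix with exactly the columns in `S`. -/
noncomputable def incCols (S : Finset (Sym2 V)) : Matrix V S ℤ :=
  Matrix.of fun v e => signedInc v e

/-- The rows of `incCols S` in `s`, made into a square matrix by identifying rows and columns
along `f`. It is used with `s` the set of all vertices but one root. -/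
noncomputable def redInc (S : Finset (Sym2 V)) (s : Finset V) (f : s ≃ S) :
    Matrix s s ℤ := (incCols S).submatrix Subtype.val f

/-- If `v` is reachable from `r` along `S`, then `e_v - e_r` is an integral combination of the
columns of `incCols S`. -/
lemma exists_combination (S : Finset (Sym2 V)) {r v : V}
    (h : (SimpleGraph.fromEdgeSet (S : Set (Sym2 V))).Reachable r v) :
    ∃ q : S → ℤ, ∀ u, (incCols S).mulVec q u =
      (if u = v then 1 else 0) - (if u = r then 1 else 0) := by
  rw [SimpleGraph.reachable_iff_reflTransGen] at h
  induction h with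
  | refl => exact ⟨0, by simp⟩
  | @tail b c _ hbc ih =>
    obtain ⟨q, hq⟩ := ih
    rw [SimpleGraph.fromEdgeSet_adj] at hbc
    have key : ∀ z : ℤ, ∀ u, (incCols S).mulVec (q + Pi.single ⟨s(b, c), by simpa using hbc.1⟩ z) u =
        (if u = b then 1 else 0) - (if u = r then 1 else 0) + signedInc u s(b, c) * z := by
      intro z u
      rw [Matrix.mulVec_add, Pi.add_apply, hq]
      simp [incCols, Matrix.mulVec_single]
    rcases exists_signedInc_eq b c with h | h
    · exact ⟨_, fun u => by rw [key (-1), h]; ring⟩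
    · exact ⟨_, fun u => by rw [key 1, h]; ring⟩

/-- The integral combinations giving `e_v - e_r` form a right inverse over `ℤ`, so the determinant
is a unit. -/
lemma det_redInc_sq_of_connected [Fintype V] (S : Finset (Sym2 V)) (r : V)
    (f : (univ.erase r : Finset V) ≃ S)
    (h : (SimpleGraph.fromEdgeSet (S : Set (Sym2 V))).Connected) :
    (redInc S _ f).det ^ 2 = 1 := by
  choose q hq using fun v => exists_combination S (h.preconnected r v)
  have hmul : redInc S _ f * Matrix.of (fun i (v : (univ.erase r : Finset V)) => q (v : V) (f i)) = 1 := by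
    ext u v
    have := hq v u
    rw [if_neg (ne_of_mem_erase u.2), sub_zero] at this
    rw [Matrix.mul_apply, Matrix.one_apply]
    simp only [Subtype.ext_iff]
    rw [← this, Matrix.mulVec, dotProduct, ← f.sum_comp]
    rfl
  have hdet := congrArg Matrix.det hmul
  rw [Matrix.det_mul, Matrix.det_one] at hdet
  have := Int.isUnit_iff.1 (IsUnit.of_mul_eq_one _ hdet)
  rcases this with h | h <;> rw [h] <;> norm_num

lemma det_redInc_of_not_connected [Fintype V] (S : Finset (Sym2 V)) (r : V)
    (f : (univ.erase r : Finset V) ≃ S)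
    (h : ¬ (SimpleGraph.fromEdgeSet (S : Set (Sym2 V))).Connected) :
    (redInc S _ f).det = 0 := by
  classical
  rw [SimpleGraph.connected_iff_exists_forall_reachable] at h
  push Not at h
  obtain ⟨w, hw⟩ := h r
  set T := SimpleGraph.fromEdgeSet (S : Set (Sym2 V)) with hT
  rw [← Matrix.exists_vecMul_eq_zero_iff]
  -- The indicator of the vertices not reachable from `r` is constant along every edge in `S`.
  refine ⟨fun u => if T.Reachable r u then 0 else 1, ?_, ?_⟩
  · intro h0
    have hwr : w ≠ r := by rintro rfl; exact hw (SimpleGraph.Reachable.refl _)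
    have := congrFun h0 ⟨w, by simp [hwr]⟩
    simp [hw] at this
  · ext i
    have h1 : ∑ u : V, (if T.Reachable r u then (0 : ℤ) else 1) * signedInc u (f i) = 0 := by
      have hmem := (f i).2
      generalize ((f i : S) : Sym2 V) = e at hmem ⊢
      induction e with
      | h a b =>
        have hab : T.Reachable r a ↔ T.Reachable r b := by
          by_cases hne : a = b
          · rw [hne]
          · have : T.Adj a b := by simp [hT, hne, hmem]
            exact ⟨fun h => h.trans this.reachable, fun h => h.trans this.reachable.symm⟩
        rcases exists_signedInc_eq a b with h | h <;>
          simp [h, mul_sub, hab]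
    -- The indicator vanishes at `r`, so the missing row does not contribute.
    rw [← Finset.add_sum_erase _ _ (mem_univ r), if_pos (SimpleGraph.Reachable.refl _), zero_mul,
      zero_add, ← Finset.sum_coe_sort] at h1
    simpa [Matrix.vecMul, dotProduct, redInc, incCols] using h1

/-- The Gram determinant is the sum over all roots `r` of `(redInc S (univ.erase r) f).det ^ 2`,
and these `n` squares are all `1` or all `0`. -/
lemma det_gram_incCols [Fintype V] (S : Finset (Sym2 V)) (hS : #S + 1 = Fintype.card V) :
    ((incCols S).transpose * incCols S).det =
      open Classical in if (SimpleGraph.fromEdgeSet (S : Set (Sym2 V))).Connected then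
        (Fintype.card V : ℤ) else 0 := by
  classical
  have h1 := sum_principal_minors_mul_comm (incCols S).transpose (incCols S) #S
  have h2 : (univ : Finset S).powersetCard #S = {univ} := by
    conv_lhs => rw [← Finset.card_attach, ← Finset.univ_eq_attach]
    exact Finset.powersetCard_self _
  have h3 : (univ : Finset V).powersetCard #S = univ.image (fun r => univ.erase r) := by
    ext s
    simp only [mem_powersetCard, subset_univ, true_and, mem_image, mem_univ]
    constructor
    · intro hs
      obtain ⟨r, hr⟩ := Finset.card_eq_one.1 (show #sᶜ = 1 by rw [Finset.card_compl]; omega)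
      refine ⟨r, ?_⟩
      rw [← compl_compl s, hr, Finset.compl_singleton]
    · rintro ⟨r, rfl⟩
      rw [Finset.card_erase_of_mem (mem_univ r), Finset.card_univ]
      omega
  rw [h2, Finset.sum_singleton, h3, Finset.sum_image] at h1
  · have h4 : (((incCols S).transpose * incCols S).submatrix
        (Subtype.val : ↥(univ : Finset S) → S) Subtype.val).det =
        ((incCols S).transpose * incCols S).det :=
      Matrix.det_submatrix_equiv_self (Equiv.subtypeUnivEquiv (fun x => mem_univ x)) _
    rw [← h4, h1]
    have h5 : ∀ r : V, ((incCols S * (incCols S).transpose).submatrix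
        (Subtype.val : ↥(univ.erase r) → V) Subtype.val).det =
        if (SimpleGraph.fromEdgeSet (S : Set (Sym2 V))).Connected then 1 else 0 := by
      intro r
      have f : (univ.erase r : Finset V) ≃ S := Finset.equivOfCardEq (by
        rw [Finset.card_erase_of_mem (mem_univ r), Finset.card_univ]; omega)
      have h6 : (incCols S * (incCols S).transpose).submatrix
          (Subtype.val : ↥(univ.erase r) → V) Subtype.val =
          redInc S _ f * (redInc S _ f).transpose := by
        rw [redInc, Matrix.transpose_submatrix, Matrix.submatrix_mul_equiv]
      rw [h6, Matrix.det_mul, Matrix.det_transpose, ← sq]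
      split_ifs with hc
      · exact det_redInc_sq_of_connected S r f hc
      · rw [det_redInc_of_not_connected S r f hc]; norm_num
    rw [Finset.sum_congr rfl fun r _ => h5 r, Finset.sum_const, Finset.card_univ]
    split_ifs <;> simp
  · intro a _ b _ hab
    by_contra hne
    have : a ∈ (univ.erase b : Finset V) := by simp [hne]
    rw [← show univ.erase a = univ.erase b from hab] at this
    simp at this

lemma minor_orientedInc [Fintype V] (G : SimpleGraph V) [DecidableRel G.Adj]
    (S : Finset (Sym2 V)) (hS : #S + 1 = Fintype.card V) :
    (((orientedInc G).transpose * orientedInc G).submatrix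
        (Subtype.val : S → Sym2 V) Subtype.val).det =
      open Classical in if (S : Set (Sym2 V)) ⊆ G.edgeSet ∧
        (SimpleGraph.fromEdgeSet (S : Set (Sym2 V))).Connected then (Fintype.card V : ℤ) else 0 := by
  classical
  by_cases hG : (S : Set (Sym2 V)) ⊆ G.edgeSet
  · have : ((orientedInc G).transpose * orientedInc G).submatrix
        (Subtype.val : S → Sym2 V) Subtype.val = (incCols S).transpose * incCols S := by
      ext e d
      have h1 : (e : Sym2 V) ∈ G.edgeSet := hG e.2
      have h2 : (d : Sym2 V) ∈ G.edgeSet := hG d.2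
      simp [Matrix.mul_apply, orientedInc, incCols, h1, h2]
    rw [this, det_gram_incCols S hS]
    simp [hG]
  · rw [if_neg fun h => hG h.1]
    obtain ⟨e, heS, heG⟩ := Set.not_subset.1 hG
    refine Matrix.det_eq_zero_of_row_eq_zero ⟨e, heS⟩ fun d => ?_
    simp [Matrix.mul_apply, orientedInc, heG]

/-- Spanning trees correspond, through their edge sets, to connected sets of `n - 1` edges. -/
lemma ncard_spanningTrees [Fintype V] (G : SimpleGraph V) [Nonempty V] :
    (spanningTrees G).ncard = open Classical in
      #(((univ : Finset (Sym2 V)).powersetCard (Fintype.card V - 1)).filter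
        fun S : Finset (Sym2 V) => (S : Set (Sym2 V)) ⊆ G.edgeSet ∧
          (SimpleGraph.fromEdgeSet (S : Set (Sym2 V))).Connected) := by
  classical
  have hpos : 0 < Fintype.card V := Fintype.card_pos
  rw [← Set.ncard_coe_finset]
  refine Set.ncard_congr (fun T _ => T.edgeFinset) ?_ ?_ ?_
  · rintro T ⟨hle, hT⟩
    have hc := hT.card_edgeFinset
    simp only [coe_filter, mem_powersetCard, subset_univ, true_and, Set.mem_ofPred_eq,
      SimpleGraph.coe_edgeFinset, SimpleGraph.fromEdgeSet_edgeSet]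
    exact ⟨by omega, SimpleGraph.edgeSet_mono hle, hT.connected⟩
  · intro T U _ _ h
    exact SimpleGraph.edgeFinset_inj.1 h
  · intro S hS
    simp only [coe_filter, mem_powersetCard, subset_univ, true_and, Set.mem_ofPred_eq] at hS
    obtain ⟨hc, hG, hconn⟩ := hS
    have hE : (SimpleGraph.fromEdgeSet (S : Set (Sym2 V))).edgeSet = S := by
      rw [SimpleGraph.edgeSet_fromEdgeSet, sdiff_eq_left, Set.disjoint_left]
      exact fun e he => G.not_isDiag_of_mem_edgeSet (hG he)
    refine ⟨SimpleGraph.fromEdgeSet (S : Set (Sym2 V)), ⟨?_, ?_⟩, ?_⟩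
    · rw [← SimpleGraph.edgeSet_subset_edgeSet, hE]; exact hG
    · rw [SimpleGraph.isTree_iff_connected_and_card]
      refine ⟨hconn, ?_⟩
      rw [hE, Nat.card_eq_fintype_card, Nat.card_eq_fintype_card]
      simp only [coe_sort_coe, Fintype.card_coe]
      omega
    · rw [← Finset.coe_inj, SimpleGraph.coe_edgeFinset, hE]

lemma charpoly_coeff [Fintype V] (G : SimpleGraph V) [DecidableRel G.Adj] [Nonempty V] :
    (G.lapMatrix ℤ).charpoly.coeff 1 =
      (-1) ^ (Fintype.card V - 1) * (Fintype.card V * (spanningTrees G).ncard) := by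
  classical
  have hpos : 0 < Fintype.card V := Fintype.card_pos
  have h1 := (G.lapMatrix ℤ).charpoly_coeff_eq_sum_minors (Fintype.card V - 1) (by omega)
  rw [show Fintype.card V - (Fintype.card V - 1) = 1 by omega] at h1
  rw [h1, lapMatrix_eq_orientedInc_mul, sum_principal_minors_mul_comm]
  congr 1
  rw [ncard_spanningTrees, Finset.sum_congr rfl fun S hS => minor_orientedInc G S (by
    rw [(mem_powersetCard.1 hS).2]; omega), ← Finset.sum_filter, Finset.sum_const, nsmul_eq_mul,
    mul_comm]

end MatrixTree

/-- Matrix-Tree theorem, eigenvalue version: if the characteristic polynomial of the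
Laplacian of `G` factors as `∏ (t - λ_i)` with `λ_n = 0`, then `n` times the number of
spanning trees of `G` is `λ_1 ⋯ λ_{n-1}`. -/
theorem matrix_tree_eigenvalues {V : Type*} [Fintype V] [DecidableEq V]
    (G : SimpleGraph V) [DecidableRel G.Adj] (n : ℕ) (hn : 0 < n)
    (hcard : Fintype.card V = n) (lam : Fin n → ℝ)
    (hchar : (G.lapMatrix ℝ).charpoly = ∏ i : Fin n, (X - C (lam i)))
    (hlast : lam ⟨n - 1, by omega⟩ = 0) :
    (n : ℝ) * (spanningTrees G).ncard
      = ∏ i ∈ (univ : Finset (Fin n)).erase ⟨n - 1, by omega⟩, lam i := by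
  have : Nonempty V := Fintype.card_pos_iff.1 (by omega)
  have hmap : G.lapMatrix ℝ = (G.lapMatrix ℤ).map (Int.castRingHom ℝ) := by
    ext v w
    by_cases h : v = w <;>
      simp [SimpleGraph.lapMatrix, SimpleGraph.degMatrix, SimpleGraph.adjMatrix_apply, h,
        apply_ite]
  have h1 := congrArg (fun p => Polynomial.coeff p 1) hchar
  rw [hmap, Matrix.charpoly_map, Polynomial.coeff_map, MatrixTree.charpoly_coeff,
    ← Finset.mul_prod_erase _ _ (mem_univ ⟨n - 1, by omega⟩), hlast, C_0, sub_zero,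
    Polynomial.coeff_X_mul, Polynomial.coeff_zero_eq_eval_zero, Polynomial.eval_prod] at h1
  simp only [eval_sub, eval_X, eval_C, zero_sub, Finset.prod_neg] at h1
  rw [Finset.card_erase_of_mem (mem_univ _), Finset.card_univ, Fintype.card_fin, hcard] at h1
  simpa using h1
end

section
/- Let n ≥ 2 and let G be a connected threshold graph on vertex set {1,…,n} with degree sequence λ = (λ_1 ≥ ⋯ ≥ λ_n), conjugate partition λ', and let s = max{k : λ_k ≥ k} (the side length of the Durfee square of λ), with the convention λ_{n+1} := 0. Then for every r ∈ {1,…,n}: if r ≤ s then s < λ'_r and λ'_r = 1 + λ_r, while if r > s then λ'_r ≤ s and λ'_r = λ_{r+1}. -/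
open Finset

/-!
Index vertices from `1`.  For `j < i` the threshold condition reads `Adj i j ↔ j ≤ λ_i` from the
side of `i`, and `Adj j i ↔ i ≤ λ_j + 1` from the side of `j` (where `j` itself is skipped), so
symmetry of adjacency gives `j ≤ λ_i ↔ i ≤ λ_j + 1`.  Together with monotonicity of `λ` this
identifies the set `{i : r ≤ λ_i}` counted by `λ'_r`: it is `{1,…,λ_r + 1}` when `r ≤ s`, and
`{1,…,λ_{r+1}}` when `r > s`.  The bounds against `s` follow from the definition of `s`.
-/

/-- Structure of the degree sequence of a connected threshold graph.  Vertices are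
`Fin n`, thought of as `{1,…,n}` via `i ↦ i + 1`; `lam k` is the degree of vertex `k`
for `1 ≤ k ≤ n` and `lam k = 0` for `k > n` (the convention `λ_{n+1} = 0`); `conj` is
the conjugate partition, and `s` is the side of the Durfee square, i.e. the largest `k`
with `λ_k ≥ k`. -/
theorem threshold_durfee (n : ℕ) (hn : 2 ≤ n)
    (G : SimpleGraph (Fin n)) (hconn : G.Connected)
    (lam : ℕ → ℕ)
    (hdeg : ∀ i : Fin n, lam ((i : ℕ) + 1) = Nat.card (G.neighborSet i))
    (hzero : ∀ k, n < k → lam k = 0)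
    (hanti : ∀ i j : Fin n, i ≤ j → lam ((j : ℕ) + 1) ≤ lam ((i : ℕ) + 1))
    (hthr : ∀ i j : Fin n, G.Adj i j ↔
      j ≠ i ∧ (if (j : ℕ) < (i : ℕ) then (j : ℕ) + 1 else (j : ℕ)) ≤ lam ((i : ℕ) + 1))
    (conj : ℕ → ℕ)
    (hconj : ∀ r, conj r = ((Finset.Icc 1 n).filter fun i => r ≤ lam i).card)
    (s : ℕ) (hs : s ≤ lam s) (hsmax : ∀ k, k ≤ lam k → k ≤ s) :
    ∀ r, 1 ≤ r → r ≤ n →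
      (r ≤ s → s < conj r ∧ conj r = 1 + lam r) ∧
      (s < r → conj r ≤ s ∧ conj r = lam (r + 1)) := by
  -- The hypotheses restated over `1`-indexed natural numbers.
  have anti : ∀ i j, 1 ≤ i → i ≤ j → lam j ≤ lam i := by
    intro i j hi hij
    by_cases hj : j ≤ n
    · have h := hanti ⟨i - 1, by omega⟩ ⟨j - 1, by omega⟩
        (by simp only [Fin.mk_le_mk]; omega)
      simpa only [Nat.sub_add_cancel hi, Nat.sub_add_cancel (hi.trans hij)] using h
    · rw [hzero j (by omega)]
      exact Nat.zero_le _
  have lt_n : ∀ i, 1 ≤ i → lam i < n := by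
    intro i hi
    by_cases hin : i ≤ n
    · classical
      have h := hdeg ⟨i - 1, by omega⟩
      rw [Nat.card_eq_fintype_card, SimpleGraph.card_neighborSet_eq_degree] at h
      have h' := G.degree_lt_card_verts ⟨i - 1, by omega⟩
      simp only [Nat.sub_add_cancel hi] at h
      rw [Fintype.card_fin] at h'
      omega
    · rw [hzero i (by omega)]
      omega
  have sym : ∀ i j, 1 ≤ j → j < i → i ≤ n → (j ≤ lam i ↔ i ≤ lam j + 1) := by
    intro i j hj hji hin
    have h₁ := hthr ⟨i - 1, by omega⟩ ⟨j - 1, by omega⟩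
    have h₂ := hthr ⟨j - 1, by omega⟩ ⟨i - 1, by omega⟩
    rw [G.adj_comm, h₂] at h₁
    have hi : 1 ≤ i := by omega
    simp only [Nat.sub_add_cancel hi, Nat.sub_add_cancel hj, ne_eq, Fin.mk.injEq,
      if_pos (show j - 1 < i - 1 by omega), if_neg (show ¬ i - 1 < j - 1 by omega)] at h₁
    omega
  have count : ∀ r m, m ≤ n → (∀ i, 1 ≤ i → i ≤ n → (r ≤ lam i ↔ i ≤ m)) → conj r = m := by
    intro r m hm h
    have hset : ((Finset.Icc 1 n).filter fun i => r ≤ lam i) = Finset.Icc 1 m := by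
      ext i
      simp only [Finset.mem_filter, Finset.mem_Icc]
      constructor
      · rintro ⟨⟨h1, h2⟩, h3⟩
        exact ⟨h1, (h i h1 h2).1 h3⟩
      · rintro ⟨h1, h2⟩
        exact ⟨⟨h1, h2.trans hm⟩, (h i h1 (h2.trans hm)).2 h2⟩
    rw [hconj, hset, Nat.card_Icc, Nat.add_sub_cancel]
  intro r hr hrn
  constructor
  · intro hrs
    have hsr := anti r s hr hrs
    have hc : conj r = lam r + 1 := by
      refine count r _ (lt_n r hr) fun i hi hin => ?_
      by_cases hir : i ≤ r
      · have := anti i r hi hir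
        omega
      · exact sym i r hr (by omega) hin
    omega
  · intro hsr
    have hr' : lam r < r := by
      by_contra h
      have := hsmax r (by omega)
      omega
    have hc : conj r = lam (r + 1) := by
      refine count r _ (lt_n (r + 1) (by omega)).le fun i hi hin => ?_
      have hr1 := anti r (r + 1) hr (by omega)
      by_cases hir : i ≤ r
      · by_cases hrn' : r + 1 ≤ n
        · have := sym (r + 1) i hi (by omega) hrn'
          omega
        · have := lt_n i hi
          have := hzero (r + 1) (by omega)
          omega
      · have := anti r i hr (by omega)
        omega
    have hs' : lam (s + 1) < s + 1 := by
      by_contra h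
      have := hsmax (s + 1) (by omega)
      omega
    have := anti (s + 1) (r + 1) (by omega) (by omega)
    omega
end

section
/- Let n be a positive integer and let R = ℤ[q_1,…,q_n][x_1^{±1},…,x_n^{±1}] be the ring of Laurent polynomials in x_1,…,x_n with coefficients in the polynomial ring ℤ[q_1,…,q_n]. Then for every subset A ⊆ {1,…,n} with |A| ≥ 2, the element f_A := Σ_{i∈A} q_i (x_i + x_i^{−1}) is irreducible in R. -/
open Finset

/-!
Write `y_i = x_i + x_i⁻¹`, so that `f_A = ∑_{i ∈ A} q_i y_i` is homogeneous of degree one in the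
variables `q`. Since `R` is a domain, in a factorization `f_A = g * h` one factor, say `g`, has
degree zero in `q`, i.e. involves no `q_i` (`qFree_or_qFree_of_mul_eq`); degrees in `q` are measured
by the homomorphism `R → R[T]`, `q_i ↦ q_i T`. Specializing `q` to the `i`-th basis vector then shows
that `g` divides `y_i` for every `i ∈ A`.

Two distinct `y_i`, `y_j` have only units as common divisors (`isUnit_of_dvd_of_dvd`). Indeed the
largest and the smallest exponent of `x_k` are additive under multiplication
(`exists_add_mem_support`), and both are `0` for `y_i` when `k ≠ i`. So all monomials of a divisor
of `y_i` have the same exponent of `x_k`, for every `k ≠ i`. A common divisor of `y_i` and `y_j` is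
therefore a single term, and its coefficient divides a coefficient of `y_i`, which is `1`.
-/

namespace FAIrreducible

/-- The ring `ℤ[q_1,…,q_n][x_1^{±1},…,x_n^{±1}]`. -/
abbrev R (n : ℕ) := AddMonoidAlgebra (MvPolynomial (Fin n) ℤ) (Fin n →₀ ℤ)

variable {n : ℕ}

/-- The variable `q_i`, as an element of `R n`. -/
noncomputable def q (i : Fin n) : R n := AddMonoidAlgebra.single 0 (MvPolynomial.X i)

/-- The element `y_i = x_i + x_i⁻¹` of `R n`. -/
noncomputable def y (i : Fin n) : R n :=
  AddMonoidAlgebra.single (Finsupp.single i (1 : ℤ)) 1 +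
    AddMonoidAlgebra.single (Finsupp.single i (-1 : ℤ)) 1

/-! ### Substitution for the variables `q` -/

/-- The homomorphism `R n → B` which sends `q_i` to `v i` and agrees with `u` on the `x_i`. -/
noncomputable def subst {B : Type*} [CommRing B] (u : R n →+* B) (v : Fin n → B) : R n →+* B :=
  AddMonoidAlgebra.liftNCRingHom (MvPolynomial.eval₂Hom (Int.castRingHom B) v)
    ((u : R n →* B).comp (AddMonoidAlgebra.of _ _)) (fun _ _ => Commute.all _ _)

section subst

variable {B : Type*} [CommRing B] (u : R n →+* B) (v : Fin n → B)

@[simp] lemma subst_q (i : Fin n) : subst u v (q i) = v i := by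
  simp [subst, q, ← AddMonoidAlgebra.one_def]

@[simp] lemma subst_single (a : Fin n →₀ ℤ) :
    subst u v (AddMonoidAlgebra.single a 1) = u (AddMonoidAlgebra.single a 1) := by
  simp [subst]

@[simp] lemma subst_y (i : Fin n) : subst u v (y i) = u (y i) := by
  simp [y]

lemma hom_ext {f g : R n →+* B} (hq : ∀ i, f (q i) = g (q i))
    (hx : ∀ a, f (AddMonoidAlgebra.single a 1) = g (AddMonoidAlgebra.single a 1)) : f = g := by
  refine AddMonoidAlgebra.ringHom_ext (fun r => ?_) hx
  have : f.comp AddMonoidAlgebra.singleZeroRingHom = g.comp AddMonoidAlgebra.singleZeroRingHom :=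
    MvPolynomial.ringHom_ext (by simp) hq
  exact RingHom.congr_fun this r

end subst

/-- The homomorphism `R → R[T]`, `q_i ↦ q_i T`, which records the degree in `q`. -/
noncomputable def grade : R n →+* Polynomial (R n) :=
  subst Polynomial.C (fun i => Polynomial.C (q i) * Polynomial.X)

lemma eval_one_grade (g : R n) : (grade g).eval 1 = g := by
  have : (Polynomial.evalRingHom (1 : R n)).comp grade = RingHom.id _ :=
    hom_ext (by simp [grade]) (by simp [grade])
  exact RingHom.congr_fun this g

lemma eval_zero_grade (g : R n) : (grade g).eval 0 = subst (RingHom.id _) 0 g := by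
  have : (Polynomial.evalRingHom (0 : R n)).comp grade = subst (RingHom.id _) 0 :=
    hom_ext (by simp [grade]) (by simp [grade])
  exact RingHom.congr_fun this g

/-- An element that is unchanged by `q ↦ 0` is unchanged by every substitution for `q`. -/
lemma subst_eq_self_of_qFree {g : R n} (hg : subst (RingHom.id _) 0 g = g) (v : Fin n → R n) :
    subst (RingHom.id _) v g = g := by
  have : (subst (RingHom.id _) v).comp (subst (RingHom.id _) 0) = subst (RingHom.id (R n)) 0 :=
    hom_ext (by simp) (by simp)
  have h := RingHom.congr_fun this g
  rwa [RingHom.comp_apply, hg] at h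

lemma qFree_of_natDegree {g : R n} (hg : (grade g).natDegree = 0) :
    subst (RingHom.id _) 0 g = g := by
  rw [← eval_zero_grade]
  conv_rhs => rw [← eval_one_grade g]
  rw [Polynomial.eq_C_of_natDegree_eq_zero hg]
  simp

lemma grade_sum (A : Finset (Fin n)) :
    grade (∑ i ∈ A, q i * y i) = Polynomial.C (∑ i ∈ A, q i * y i) * Polynomial.X := by
  simp only [grade, map_sum, map_mul, subst_q, subst_y, Finset.sum_mul]
  exact Finset.sum_congr rfl fun i _ => by ring

lemma qFree_or_qFree_of_mul_eq {A : Finset (Fin n)} {g h : R n}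
    (h0 : ∑ i ∈ A, q i * y i ≠ 0) (e : ∑ i ∈ A, q i * y i = g * h) :
    subst (RingHom.id _) 0 g = g ∨ subst (RingHom.id _) 0 h = h := by
  have e' := grade_sum A
  have hne : Polynomial.C (∑ i ∈ A, q i * y i) * Polynomial.X ≠ 0 :=
    mul_ne_zero (Polynomial.C_ne_zero.2 h0) Polynomial.X_ne_zero
  have hd : (grade (g * h)).natDegree = 1 := by
    rw [← e, e', Polynomial.natDegree_C_mul_X _ h0]
  rw [← e', e, map_mul] at hne
  rw [map_mul, Polynomial.natDegree_mul (left_ne_zero_of_mul hne) (right_ne_zero_of_mul hne)] at hd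
  rcases Nat.eq_zero_or_pos (grade g).natDegree with h1 | h1
  · exact .inl (qFree_of_natDegree h1)
  · exact .inr (qFree_of_natDegree (by omega))

/-- Specializing `q` to the `i`-th basis vector. -/
lemma subst_single_sum {A : Finset (Fin n)} {i : Fin n} (hi : i ∈ A) :
    subst (RingHom.id (R n)) (Pi.single i 1) (∑ k ∈ A, q k * y k) = y i := by
  simp only [map_sum, map_mul, subst_q, subst_y, RingHom.id_apply]
  rw [Finset.sum_eq_single_of_mem i hi (fun k _ hk => by simp [hk])]
  simp

lemma dvd_y_of_qFree {A : Finset (Fin n)} {g : R n} (hg : subst (RingHom.id _) 0 g = g)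
    (e : g ∣ ∑ i ∈ A, q i * y i) {i : Fin n} (hi : i ∈ A) : g ∣ y i := by
  have h := map_dvd (subst (RingHom.id (R n)) (Pi.single i 1)) e
  rwa [subst_single_sum hi, subst_eq_self_of_qFree hg] at h

/-! ### Common divisors of `y_i` and `y_j` -/

lemma coeff_y (i : Fin n) : (y i).coeff (Finsupp.single i 1) = 1 := by
  have h : (Finsupp.single i (-1 : ℤ)) ≠ Finsupp.single i 1 := fun h => by
    simpa using DFunLike.congr_fun h i
  rw [y, AddMonoidAlgebra.coeff_add, Finsupp.add_apply, AddMonoidAlgebra.coeff_single,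
    AddMonoidAlgebra.coeff_single, Finsupp.single_eq_same, Finsupp.single_eq_of_ne' h, add_zero]

lemma y_ne_zero (i : Fin n) : y i ≠ 0 := by
  intro h
  have := coeff_y i
  simp [h] at this

lemma apply_eq_zero_of_mem_support {i k : Fin n} (hk : k ≠ i) {a : Fin n →₀ ℤ}
    (ha : a ∈ (y i).coeff.support) : a k = 0 := by
  classical
  have := Finsupp.support_add ha
  rw [Finset.mem_union] at this
  rcases this with h | h <;>
  · have := Finsupp.support_single_subset h
    rw [Finset.mem_singleton] at this
    simp [this, hk.symm]

/-- The top faces of two Newton polytopes, in the direction of a weight `w`, add up to a face of the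
Newton polytope of the product: the sum of two suitable monomials of maximal weight is a monomial of
the product. -/
lemma exists_add_mem_support (w : (Fin n →₀ ℤ) →+ ℤ) {c d : R n} (hc : c ≠ 0) (hd : d ≠ 0) :
    ∃ a ∈ c.coeff.support, ∃ b ∈ d.coeff.support, (∀ a' ∈ c.coeff.support, w a' ≤ w a) ∧
      (∀ b' ∈ d.coeff.support, w b' ≤ w b) ∧ a + b ∈ (c * d).coeff.support := by
  classical
  obtain ⟨a₀, ha₀, hca⟩ := c.coeff.support.exists_max_image w
    (Finsupp.support_nonempty_iff.2 (by simpa using hc))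
  obtain ⟨b₀, hb₀, hdb⟩ := d.coeff.support.exists_max_image w
    (Finsupp.support_nonempty_iff.2 (by simpa using hd))
  obtain ⟨a, ha, b, hb, hu⟩ := UniqueSums.uniqueAdd_of_nonempty
    (A := {a ∈ c.coeff.support | w a = w a₀}) (B := {b ∈ d.coeff.support | w b = w b₀})
    ⟨a₀, by simp [Finsupp.mem_support_iff.1 ha₀]⟩ ⟨b₀, by simp [Finsupp.mem_support_iff.1 hb₀]⟩
  rw [Finset.mem_filter] at ha hb
  have hU : UniqueAdd c.coeff.support d.coeff.support a b := by
    intro a' b' ha' hb' he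
    have hw := congrArg w he
    rw [map_add, map_add, ha.2, hb.2] at hw
    have h1 := hca a' ha'
    have h2 := hdb b' hb'
    exact hu (Finset.mem_filter.2 ⟨ha', by omega⟩) (Finset.mem_filter.2 ⟨hb', by omega⟩) he
  refine ⟨a, ha.1, b, hb.1, fun a' h => ha.2 ▸ hca a' h, fun b' h => hb.2 ▸ hdb b' h, ?_⟩
  rw [Finsupp.mem_support_iff, AddMonoidAlgebra.coeff_mul_add_of_uniqueAdd hU]
  exact mul_ne_zero (Finsupp.mem_support_iff.1 ha.1) (Finsupp.mem_support_iff.1 hb.1)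

lemma apply_eq_of_dvd_y {c : R n} {i k : Fin n} (h : c ∣ y i) (hk : k ≠ i) {a a' : Fin n →₀ ℤ}
    (ha : a ∈ c.coeff.support) (ha' : a' ∈ c.coeff.support) : a k = a' k := by
  obtain ⟨d, e⟩ := h
  have hne : c * d ≠ 0 := e ▸ y_ne_zero i
  have hc := left_ne_zero_of_mul hne
  have hd := right_ne_zero_of_mul hne
  -- `s`, `t` are monomials of maximal, and `s'`, `t'` of minimal, exponent of `x_k`.
  obtain ⟨s, hs, t, ht, hsm, htm, hst⟩ :=
    exists_add_mem_support (Finsupp.applyAddHom k) hc hd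
  obtain ⟨s', hs', t', ht', hsm', htm', hst'⟩ :=
    exists_add_mem_support (-Finsupp.applyAddHom k) hc hd
  rw [← e] at hst hst'
  have e1 := apply_eq_zero_of_mem_support hk hst
  have e2 := apply_eq_zero_of_mem_support hk hst'
  simp only [Finsupp.applyAddHom_apply, AddMonoidHom.neg_apply, Finsupp.add_apply] at *
  have := hsm a ha
  have := hsm a' ha'
  have := hsm' a ha
  have := hsm' a' ha'
  have := htm t' ht'
  omega

lemma isUnit_of_dvd_of_dvd {c : R n} {i j : Fin n} (hij : i ≠ j) (hi : c ∣ y i) (hj : c ∣ y j) :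
    IsUnit c := by
  have hc : c ≠ 0 := ne_zero_of_dvd_ne_zero (y_ne_zero i) hi
  obtain ⟨a, ha⟩ : c.coeff.support.Nonempty :=
    Finsupp.support_nonempty_iff.2 (by simpa using hc)
  have hsupp : c.coeff.support ⊆ {a} := by
    intro a' ha'
    rw [Finset.mem_singleton]
    ext k
    rcases eq_or_ne k i with rfl | hk
    · exact apply_eq_of_dvd_y hj hij ha' ha
    · exact apply_eq_of_dvd_y hi hk ha' ha
  obtain ⟨m, hm⟩ : ∃ m, c = AddMonoidAlgebra.single a m := by
    obtain ⟨m, hm⟩ := Finsupp.support_subset_singleton'.1 hsupp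
    exact ⟨m, AddMonoidAlgebra.ext hm⟩
  obtain ⟨d, e⟩ := hi
  have h1 : m * d.coeff (-a + Finsupp.single i 1) = 1 := by
    rw [← coeff_y i, e, hm, AddMonoidAlgebra.coeff_single_mul_apply]
  rw [hm]
  refine IsUnit.of_mul_eq_one
    (AddMonoidAlgebra.single (-a) (d.coeff (-a + Finsupp.single i 1))) ?_
  rw [AddMonoidAlgebra.single_mul_single, h1, add_neg_cancel]
  rfl

end FAIrreducible

open FAIrreducible in
/-- In the ring `R = ℤ[q_1,…,q_n][x_1^{±1},…,x_n^{±1}]` of Laurent polynomials in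
`x_1,…,x_n` over `ℤ[q_1,…,q_n]` — realized as the group algebra of `Fin n →₀ ℤ` over
`MvPolynomial (Fin n) ℤ`, with `x_i = single (Finsupp.single i 1) 1`,
`x_i⁻¹ = single (Finsupp.single i (-1)) 1` and `q_i = single 0 (X i)` — the element
`f_A = Σ_{i ∈ A} q_i (x_i + x_i⁻¹)` is irreducible for every `A` with `|A| ≥ 2`. -/
theorem fA_irreducible (n : ℕ) (A : Finset (Fin n)) (hA : 2 ≤ A.card) :
    Irreducible (∑ i ∈ A,
      (AddMonoidAlgebra.single (0 : Fin n →₀ ℤ) (MvPolynomial.X i) :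
          AddMonoidAlgebra (MvPolynomial (Fin n) ℤ) (Fin n →₀ ℤ)) *
        (AddMonoidAlgebra.single (Finsupp.single i (1 : ℤ))
            (1 : MvPolynomial (Fin n) ℤ) +
          AddMonoidAlgebra.single (Finsupp.single i (-1 : ℤ)) 1)) := by
  change Irreducible (∑ i ∈ A, q i * y i)
  obtain ⟨i, hi, j, hj, hij⟩ := Finset.one_lt_card.1 hA
  have h0 : ∑ i ∈ A, q i * y i ≠ 0 := by
    intro h
    have := subst_single_sum hi
    rw [h, map_zero] at this
    exact y_ne_zero i this.symm
  refine ⟨fun hu => ?_, fun g h e => ?_⟩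
    -- Setting all `q_i = 0` maps `f_A` to `0`, which is not a unit.
  · have := hu.map (subst (RingHom.id (R n)) 0)
    simp at this
  · rcases qFree_or_qFree_of_mul_eq h0 e with hg | hh
    · have hd : g ∣ ∑ i ∈ A, q i * y i := ⟨h, e⟩
      exact .inl (isUnit_of_dvd_of_dvd hij (dvd_y_of_qFree hg hd hi) (dvd_y_of_qFree hg hd hj))
    · have hd : h ∣ ∑ i ∈ A, q i * y i := ⟨g, e.trans (mul_comm _ _)⟩
      exact .inr (isUnit_of_dvd_of_dvd hij (dvd_y_of_qFree hh hd hi) (dvd_y_of_qFree hh hd hj))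
end
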